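/- Let X be a tree and p ∈ X. Then (X,p) has unique hyperspace C(p,X) in the class 𝒯 of trees; that is, for every tree Y and q ∈ Y such that C(p,X) is homeomorphic to C(q,Y), there is a homeomorphism 𝔥 : X → Y with 𝔥(p) = q. -/

import Mathlib

open Set Topology TopologicalSpace

universe u

/-- `IndDimLE m α t` means that the small inductive dimension of `α` is at most `m - 1`.
In particular `IndDimLE 0 α t` means `α` is empty (dimension `-1`). -/
def IndDimLE : ℕ → (α : Type u) → TopologicalSpace α → Prop
  | 0, α, _ => IsEmpty α
  | n + 1, α, t =>
      ∀ (x : α) (U : Set α), @IsOpen α t U → x ∈ U →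
        ∃ V : Set α, @IsOpen α t V ∧ x ∈ V ∧ V ⊆ U ∧
          IndDimLE n (↥(@frontier α t V))
            (TopologicalSpace.induced (Subtype.val : ↥(@frontier α t V) → α) t)

/-- The small inductive dimension of a topological space, as an integer
(with junk value if the dimension is infinite). -/
noncomputable def indDim (α : Type u) [t : TopologicalSpace α] : ℤ :=
  sInf {d : ℤ | ∃ m : ℕ, d = (m : ℤ) - 1 ∧ IndDimLE m α t}

section Defs

variable {X : Type u} [TopologicalSpace X]

/-- `A` is an arc, i.e. homeomorphic to `[0,1]`. -/
def IsArcSet (A : Set X) : Prop :=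
  Nonempty (↥A ≃ₜ ↥(Icc (0 : ℝ) 1))

/-- `A` is an arc with end points `a` and `b`. -/
def IsArcFromTo (A : Set X) (a b : X) : Prop :=
  ∃ h : ↥(Icc (0 : ℝ) 1) ≃ₜ ↥A,
    ((h ⟨0, by norm_num⟩ : ↥A) : X) = a ∧ ((h ⟨1, by norm_num⟩ : ↥A) : X) = b

/-- `a` is an end point of the arc `A`. -/
def IsArcEndpoint (A : Set X) (a : X) : Prop := ∃ b, IsArcFromTo A a b

/-- The points of the arc `A` which are not end points of `A`. -/
def arcInterior (A : Set X) : Set X := {x ∈ A | ¬ IsArcEndpoint A x}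

/-- `N` is a simple `n`-od with vertex `v`: the union of `n` arcs emanating from `v`
and otherwise disjoint from each other. -/
def IsSimpleNod (n : ℕ) (N : Set X) (v : X) : Prop :=
  0 < n ∧ ∃ A : Fin n → Set X, (∀ i, IsArcSet (A i)) ∧ (⋃ i, A i) = N ∧
    (∀ i, IsArcEndpoint (A i) v) ∧ ∀ i j, i ≠ j → A i ∩ A j = {v}

/-- `x` has order `n` in the subspace `S`: `x` has a closed neighborhood in `S`
which is a simple `n`-od having `x` as the vertex. -/
def HasOrdIn (S : Set X) (x : X) (n : ℕ) : Prop :=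
  ∃ N : Set X, N ⊆ S ∧ IsClosed N ∧ (∃ U : Set X, IsOpen U ∧ x ∈ U ∧ U ∩ S ⊆ N) ∧
    IsSimpleNod n N x

/-- The order of `x` in the subspace `S`. -/
noncomputable def ordIn (S : Set X) (x : X) : ℕ := sInf {n | HasOrdIn S x n}

/-- End points (order `1`) of the subspace `S`. -/
def endPtsIn (S : Set X) : Set X := {x ∈ S | HasOrdIn S x 1}

/-- Ordinary points (order `2`) of the subspace `S`. -/
def ordinaryIn (S : Set X) : Set X := {x ∈ S | HasOrdIn S x 2}

/-- Ramification points (order `≥ 3`) of the subspace `S`. -/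
def ramifIn (S : Set X) : Set X := {x ∈ S | ∃ n, 3 ≤ n ∧ HasOrdIn S x n}

/-- Vertices (points of order `≠ 2`) of the subspace `S`. -/
def verticesIn (S : Set X) : Set X := {x ∈ S | ¬ HasOrdIn S x 2}

/-- `e` is an edge of the subspace `S`: an arc joining two vertices of `S` and
containing no more than two vertices of `S`. -/
def IsEdgeIn (S : Set X) (e : Set X) : Prop :=
  e ⊆ S ∧ ∃ a b, a ∈ verticesIn S ∧ b ∈ verticesIn S ∧ IsArcFromTo e a b ∧
    e ∩ verticesIn S ⊆ {a, b}

/-- `S` is a simple closed curve. -/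
def IsSimpleClosedCurve (S : Set X) : Prop := Nonempty (↥S ≃ₜ Circle)

end Defs

/-- `X` is an arc (as a space). -/
def IsArcSpace (X : Type u) [TopologicalSpace X] : Prop :=
  Nonempty (X ≃ₜ ↥(Icc (0 : ℝ) 1))

/-- `X` is a finite graph: a continuum which is the union of finitely many arcs, any two
of which are either disjoint or intersect only in one or both of their end points. -/
def IsFiniteGraph (X : Type u) [MetricSpace X] : Prop :=
  CompactSpace X ∧ ConnectedSpace X ∧ Nonempty X ∧
    ∃ 𝒜 : Finset (Set X), (∀ A ∈ 𝒜, IsArcSet A) ∧ ⋃₀ (𝒜 : Set (Set X)) = univ ∧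
      ∀ A ∈ 𝒜, ∀ B ∈ 𝒜, A ≠ B → ∀ x ∈ A ∩ B, IsArcEndpoint A x ∧ IsArcEndpoint B x

/-- `X` is a tree: a finite graph without simple closed curves. -/
def IsTree (X : Type u) [MetricSpace X] : Prop :=
  IsFiniteGraph X ∧ ∀ S : Set X, ¬ IsSimpleClosedCurve S

/-- `X` is neither an arc nor a simple `n`-od. -/
def NotArcNotNod (X : Type u) [MetricSpace X] : Prop :=
  ¬ IsArcSpace X ∧ ∀ (n : ℕ) (v : X), ¬ IsSimpleNod n (univ : Set X) v

/-- `T(X)`: the union of all edges of `X` disjoint from the set of end points of `X`. -/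
def Tpart (X : Type u) [MetricSpace X] : Set X :=
  ⋃₀ {e : Set X | IsEdgeIn (univ : Set X) e ∧ e ∩ endPtsIn (univ : Set X) = ∅}

/-- `Sub_p(T(X))`: subtrees of `T(X)` containing `p` (subcontinua of `T(X)` all of whose
edges are edges of `X`). -/
def SubTreesP (X : Type u) [MetricSpace X] (p : X) : Set (Set X) :=
  {Y | Y ⊆ Tpart X ∧ p ∈ Y ∧ IsCompact Y ∧ IsConnected Y ∧
    ∀ e : Set X, IsEdgeIn Y e → IsEdgeIn (univ : Set X) e}

/-- Subtrees of the tree `X`. -/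
def Subtrees (X : Type u) [MetricSpace X] : Set (Set X) :=
  {Y | IsCompact Y ∧ IsConnected Y ∧
    ∀ e : Set X, IsEdgeIn Y e → IsEdgeIn (univ : Set X) e}

/-- The smallest subtree of `X` containing `a` and `b`. -/
def treeHull (X : Type u) [MetricSpace X] (a b : X) : Set X :=
  ⋂₀ {Y | Y ∈ Subtrees X ∧ a ∈ Y ∧ b ∈ Y}

/-- The hyperspace `C(p,X)` of subcontinua of `X` containing `p`,
with the Hausdorff metric. -/
def CP (X : Type u) [MetricSpace X] (p : X) : Type u :=
  {A : NonemptyCompacts X // IsConnected (A : Set X) ∧ p ∈ (A : Set X)}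

noncomputable instance (X : Type u) [MetricSpace X] (p : X) : MetricSpace (CP X p) :=
  inferInstanceAs (MetricSpace
    {A : NonemptyCompacts X // IsConnected (A : Set X) ∧ p ∈ (A : Set X)})

/-- The underlying subset of `X` of an element of `C(p,X)`. -/
def CP.set {X : Type u} [MetricSpace X] {p : X} (A : CP X p) : Set X := (A.1 : Set X)

/-- `U_n(X)`: elements of `C(p,X)` having a neighborhood in `C(p,X)` homeomorphic to
the `n`-cell `[0,1]^n`. -/
def Un (X : Type u) [MetricSpace X] (p : X) (n : ℕ) : Set (CP X p) :=
  {A | ∃ N : Set (CP X p), N ∈ 𝓝 A ∧ Nonempty (↥N ≃ₜ (Fin n → ↥(Icc (0 : ℝ) 1)))}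

/-- `𝒰(X) = ⋃ₙ U_n(X)`. -/
def UnionUn (X : Type u) [MetricSpace X] (p : X) : Set (CP X p) := ⋃ n : ℕ, Un X p n

/-- The edges of `X` which are not edges of `Y` and intersect `Y`. -/
def incidentE (X : Type u) [MetricSpace X] (Y : Set X) : Set (Set X) :=
  {e | IsEdgeIn (univ : Set X) e ∧ ¬ IsEdgeIn Y e ∧ (e ∩ Y).Nonempty}

/-- `U_Y`: elements of `C(p,X)` of the form `Y` together with exactly one interior point
of each edge of `X` incident on `Y`. -/
def UofY (X : Type u) [MetricSpace X] (p : X) (Y : Set X) : Set (CP X p) :=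
  {B | ∃ f : ↥(incidentE X Y) → X,
    (∀ e : ↥(incidentE X Y), f e ∈ arcInterior (e : Set X)) ∧ B.set = Y ∪ range f}

/-- `(X,p)` has unique hyperspace `C(p,X)` in the class of trees. -/
def UniqueHyperspaceInTrees (X : Type u) [MetricSpace X] (p : X) : Prop :=
  ∀ (Y : Type u) [MetricSpace Y], IsTree Y → ∀ q : Y,
    Nonempty (CP X p ≃ₜ CP Y q) → ∃ 𝔥 : X ≃ₜ Y, 𝔥 p = q

/-- The `j`-th vertex of the Kuhn simplex with base point `x` and ranking `r` of the directions. -/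
def kuhnVertex {m : ℕ} (x : Fin m → ℕ) (r : Equiv.Perm (Fin m)) (j : ℕ) : Fin m → ℕ :=
  fun i => x i + if (r i : ℕ) < j then 1 else 0

/-- Every nonzero label occurs at a position different from `j`. -/
def OmitsOnlyZero {m : ℕ} (f : Fin (m + 1) → Fin (m + 1)) (j : Fin (m + 1)) : Prop :=
  ∀ a, a ≠ 0 → ∃ l, l ≠ j ∧ f l = a

open Classical in
theorem card_omitsOnlyZero {m : ℕ} (f : Fin (m + 1) → Fin (m + 1)) :
    ((Finset.univ.filter (OmitsOnlyZero f)).card : ZMod 2) =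
      if Function.Surjective f then 1 else 0 := by
  split_ifs with hs
  · have hinj : Function.Injective f := Finite.injective_iff_surjective.2 hs
    obtain ⟨j, hj⟩ := hs 0
    have : Finset.univ.filter (OmitsOnlyZero f) = {j} := by
      ext i
      simp only [Finset.mem_filter, Finset.mem_univ, true_and, Finset.mem_singleton]
      constructor
      · intro h
        by_contra hij
        have hne : f i ≠ 0 := fun h0 => hij (hinj (h0.trans hj.symm))
        obtain ⟨l, hl, hfl⟩ := h _ hne
        exact hl (hinj hfl)
      · rintro rfl a ha
        obtain ⟨l, rfl⟩ := hs a
        exact ⟨l, fun h => ha (h ▸ hj), rfl⟩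
    simp [this]
  · by_cases h : ∀ a, a ≠ 0 → ∃ l, f l = a
    · have h0 : ∀ l, f l ≠ 0 := by
        intro l hl
        apply hs
        intro a
        by_cases ha : a = 0
        · exact ⟨l, hl.trans ha.symm⟩
        · exact h a ha
      have hni : ¬ Function.Injective f := fun hi => hs (Finite.injective_iff_surjective.1 hi)
      simp only [Function.Injective, not_forall] at hni
      obtain ⟨a, b, hab, hne⟩ := hni
      have : Finset.univ.filter (OmitsOnlyZero f) = {a, b} := by
        ext j
        simp only [Finset.mem_filter, Finset.mem_univ, true_and, Finset.mem_insert,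
          Finset.mem_singleton]
        constructor
        · intro hj
          by_contra hc
          push Not at hc
          have := Finset.inj_on_of_surj_on_of_card_le (s := Finset.univ.erase j)
            (t := Finset.univ.erase 0) (fun l _ => f l) (fun l _ => by simp [h0 l])
            (fun c hc => by
              obtain ⟨l, hl, e⟩ := hj c (by simpa using hc)
              exact ⟨l, by simpa using hl, e⟩) (by simp)
          exact hne (this (a₁ := a) (a₂ := b) (by simpa using Ne.symm hc.1)
            (by simpa using Ne.symm hc.2) hab)
        · rintro (rfl | rfl) c hc
          · obtain ⟨l, rfl⟩ := h c hc
            by_cases hl : l = j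
            · exact ⟨b, Ne.symm hne, by rw [hl, hab]⟩
            · exact ⟨l, hl, rfl⟩
          · obtain ⟨l, rfl⟩ := h c hc
            by_cases hl : l = j
            · exact ⟨a, hne, by rw [hl, hab]⟩
            · exact ⟨l, hl, rfl⟩
      rw [this, Finset.card_pair hne]
      rfl
    · push Not at h
      obtain ⟨a, ha, hl⟩ := h
      have : Finset.univ.filter (OmitsOnlyZero f) = ∅ := by
        ext j
        simp only [Finset.mem_filter, Finset.mem_univ, true_and, Finset.notMem_empty, iff_false]
        intro hj
        obtain ⟨l, -, h⟩ := hj a ha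
        exact hl l h
      simp [this]

/-- Move to the Kuhn simplex sharing the facet opposite to the vertex `j`. -/
def kuhnFlip {n : ℕ} (s : (Fin (n + 1) → ℕ) × Equiv.Perm (Fin (n + 1)) × Fin (n + 2)) :
    (Fin (n + 1) → ℕ) × Equiv.Perm (Fin (n + 1)) × Fin (n + 2) :=
  if s.2.2 = 0 then
    (fun i => s.1 i + if s.2.1 i = 0 then 1 else 0, s.2.1.trans (Equiv.subRight 1), Fin.last _)
  else if s.2.2 = Fin.last _ then
    (fun i => s.1 i - if s.2.1 i = Fin.last _ then 1 else 0, s.2.1.trans (Equiv.addRight 1), 0)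
  else (s.1, s.2.1.trans (Equiv.swap (Fin.ofNat (n + 1) (s.2.2 - 1)) (Fin.ofNat (n + 1) s.2.2)),
    s.2.2)

theorem val_sub_one' {n : ℕ} (a : Fin (n + 1)) : ((a - 1 : Fin (n+1)) : ℕ) = if (a:ℕ) = 0 then n else (a:ℕ) - 1 := by
  rw [Fin.coe_sub_one]
  simp only [Fin.ext_iff, Fin.val_zero]

theorem val_add_one' {n : ℕ} (a : Fin (n + 1)) : ((a + 1 : Fin (n+1)) : ℕ) = if (a:ℕ) = n then 0 else (a:ℕ) + 1 := by
  rw [Fin.val_add_one]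
  simp only [Fin.ext_iff, Fin.val_last]

theorem kuhnFlip_flip {n : ℕ} (x : Fin (n + 1) → ℕ) (r : Equiv.Perm (Fin (n + 1)))
    (j : Fin (n + 2)) (h : j = Fin.last _ → ∀ i, r i = Fin.last _ → x i ≠ 0) :
    kuhnFlip (kuhnFlip (x, r, j)) = (x, r, j) := by
  by_cases h0 : j = 0
  · subst h0
    have hl : (Fin.last (n + 1)) ≠ 0 := Fin.last_pos.ne'
    simp only [kuhnFlip, if_true, hl, if_false, Prod.mk.injEq, and_true]
    constructor
    · funext i
      have : (r i - 1 = Fin.last n) ↔ r i = 0 := by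
        simp only [Fin.ext_iff, val_sub_one', Fin.val_last, Fin.val_zero]
        have := (r i).2
        split_ifs <;> omega
      simp [this]
    · ext i; simp
  · by_cases hl : j = Fin.last _
    · subst hl
      simp only [kuhnFlip, h0, if_true, if_false, Prod.mk.injEq, and_true]
      constructor
      · funext i
        have : (r i + 1 = 0) ↔ r i = Fin.last n := by
          have h1 := (r i).2
          rw [Fin.ext_iff, Fin.ext_iff, val_add_one', Fin.val_last, Fin.val_zero]
          split_ifs with h3 <;> simp [h3]
        have h2 := h rfl i
        simp only [Equiv.trans_apply, Equiv.coe_addRight, this]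
        split_ifs with h3
        · have := h2 h3; omega
        · omega
      · ext i; simp
    · simp only [kuhnFlip, h0, hl, if_false, Prod.mk.injEq, and_true, true_and]
      ext i; simp

theorem kuhnFlip_ne {n : ℕ} (x : Fin (n + 1) → ℕ) (r : Equiv.Perm (Fin (n + 1)))
    (j : Fin (n + 2)) : kuhnFlip (x, r, j) ≠ (x, r, j) := by
  have hl0 : (Fin.last (n + 1)) ≠ 0 := Fin.last_pos.ne'
  by_cases h0 : j = 0
  · subst h0
    intro h
    simp only [kuhnFlip, if_true, Prod.mk.injEq] at h
    exact hl0 h.2.2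
  · by_cases hl : j = Fin.last _
    · subst hl
      intro h
      simp only [kuhnFlip, h0, if_true, if_false, Prod.mk.injEq] at h
      exact hl0 h.2.2.symm
    · intro h
      simp only [kuhnFlip, h0, hl, if_false, Prod.mk.injEq, and_true, true_and] at h
      have h1 := congrArg (fun e : Equiv.Perm (Fin (n+1)) => e (r.symm (Fin.ofNat (n + 1) j))) h
      simp only [Equiv.trans_apply, Equiv.apply_symm_apply, Equiv.swap_apply_right] at h1
      have h2 := congrArg Fin.val h1
      have hj := j.2
      have h3 : (j : ℕ) ≠ 0 := fun h => h0 (Fin.ext h)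
      have h4 : (j : ℕ) ≠ n + 1 := fun h => hl (Fin.ext h)
      simp only [Fin.ofNat, ] at h2
      rw [Nat.mod_eq_of_lt (by omega), Nat.mod_eq_of_lt (by omega)] at h2
      omega

theorem kuhnFlip_facet {n : ℕ} (x : Fin (n + 1) → ℕ) (r : Equiv.Perm (Fin (n + 1)))
    (j : Fin (n + 2)) (h : j = Fin.last _ → ∀ i, r i = Fin.last _ → x i ≠ 0)
    (l : Fin (n + 2)) (hl : l ≠ j) :
    ∃ l' : Fin (n + 2), l' ≠ (kuhnFlip (x, r, j)).2.2 ∧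
      kuhnVertex (kuhnFlip (x, r, j)).1 (kuhnFlip (x, r, j)).2.1 l' = kuhnVertex x r l := by
  have hl0 : (Fin.last (n + 1)) ≠ 0 := Fin.last_pos.ne'
  by_cases h0 : j = 0
  · subst h0
    have hl' : (l : ℕ) ≠ 0 := fun h => hl (Fin.ext h)
    refine ⟨⟨l - 1, by omega⟩, ?_, ?_⟩
    · simp only [kuhnFlip, if_true, ne_eq, Fin.ext_iff, Fin.val_last]; omega
    · funext i
      simp only [kuhnFlip, if_true, kuhnVertex, Equiv.trans_apply, Equiv.subRight_apply,
        val_sub_one', Fin.ext_iff, Fin.val_zero]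
      have := (r i).2
      split_ifs <;> omega
  · by_cases hlast : j = Fin.last _
    · subst hlast
      have hl' : (l : ℕ) ≠ n + 1 := fun h => hl (Fin.ext h)
      refine ⟨⟨l + 1, by omega⟩, ?_, ?_⟩
      · simp only [kuhnFlip, h0, if_true, if_false, ne_eq, Fin.ext_iff, Fin.val_zero]; omega
      · funext i
        have h2 := h rfl i
        simp only [Fin.ext_iff, Fin.val_last] at h2
        simp only [kuhnFlip, h0, if_true, if_false, kuhnVertex, Equiv.trans_apply,
          Equiv.coe_addRight, val_add_one', Fin.ext_iff, Fin.val_last]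
        have := (r i).2
        split_ifs <;> omega
    · have h3 : (j : ℕ) ≠ 0 := fun h => h0 (Fin.ext h)
      have h4 : (j : ℕ) ≠ n + 1 := fun h => hlast (Fin.ext h)
      have h5 : (l : ℕ) ≠ j := fun h => hl (Fin.ext h)
      refine ⟨l, ?_, ?_⟩
      · simpa only [kuhnFlip, h0, hlast, if_false] using hl
      · funext i
        simp only [kuhnFlip, h0, hlast, if_false, kuhnVertex, Equiv.trans_apply,
          Equiv.swap_apply_def, apply_ite Fin.val, Fin.ext_iff, Fin.ofNat]
        rw [Nat.mod_eq_of_lt (show (j:ℕ) - 1 < n + 1 by omega),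
          Nat.mod_eq_of_lt (show (j:ℕ) < n + 1 by omega)]
        split_ifs <;> omega

open Classical in
/-- Sperner's lemma for the Kuhn triangulation of a cube. -/
theorem kuhn_sperner {k : ℕ} (hk : 0 < k) : ∀ (m : ℕ) (L : (Fin m → ℕ) → Fin (m + 1)),
    (∀ x i, x i = 0 → L x ≠ i.succ) → (∀ x i, x i = k → i.succ ≤ L x) →
    ∑ x ∈ Fintype.piFinset (fun _ : Fin m => Finset.range k), ∑ r : Equiv.Perm (Fin m),
      (if Function.Surjective (fun j : Fin (m + 1) => L (kuhnVertex x r j)) then (1 : ZMod 2)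
        else 0) = 1
  | 0, L, _, _ => by
    have h : ∀ x r, Function.Surjective (fun j : Fin (0 + 1) => L (kuhnVertex x r j)) :=
      fun x r a => ⟨0, (Subsingleton.elim (α := Fin 1) _ _)⟩
    rw [Fintype.piFinset_of_isEmpty]
    simp only [Finset.univ_unique, Finset.sum_singleton]
    exact if_pos (h _ _)
  | n + 1, L, h0, hk' => by
    set B := Fintype.piFinset (fun _ : Fin (n + 1) => Finset.range k) with hB
    set f : (Fin (n + 1) → ℕ) → Equiv.Perm (Fin (n + 1)) → Fin (n + 2) → Fin (n + 2) :=
      fun x r j => L (kuhnVertex x r j) with hf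
    have e1 : ∀ x r, (if Function.Surjective (f x r) then (1 : ZMod 2) else 0) =
        ∑ j : Fin (n + 2), if OmitsOnlyZero (f x r) j then 1 else 0 := by
      intro x r
      rw [← card_omitsOnlyZero, Finset.card_filter]
      push_cast
      rfl
    -- the facets in the face `x 0 = k`
    set U : (Fin (n + 1) → ℕ) → Equiv.Perm (Fin (n + 1)) → Fin (n + 2) → Prop :=
      fun x r j => j = 0 ∧ x (r.symm 0) + 1 = k with hU
    have e2 : ∑ s ∈ B ×ˢ ((Finset.univ : Finset (Equiv.Perm (Fin (n + 1)))) ×ˢ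
        (Finset.univ : Finset (Fin (n + 2)))),
        (if OmitsOnlyZero (f s.1 s.2.1) s.2.2 ∧ ¬ U s.1 s.2.1 s.2.2 then (1 : ZMod 2) else 0)
        = 0 := by
      rw [← Finset.sum_filter]
      have hlast : ∀ x r (j : Fin (n + 2)), OmitsOnlyZero (f x r) j → j = Fin.last _ →
          ∀ i, r i = Fin.last _ → x i ≠ 0 := by
        rintro x r j hj rfl i hi hx
        obtain ⟨l, hl, hfl⟩ := hj i.succ (Fin.succ_ne_zero i)
        refine h0 _ i ?_ hfl
        have : (l : ℕ) ≠ n + 1 := fun h => hl (Fin.ext h)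
        have h2 := l.2
        simp only [kuhnVertex, hi, hx, Fin.val_last]
        split_ifs <;> omega
      refine Finset.sum_involution (fun s _ => kuhnFlip s) ?_ ?_ ?_ ?_
      · intros; decide
      · rintro ⟨x, r, j⟩ _ _
        exact kuhnFlip_ne x r j
      · rintro ⟨x, r, j⟩ hs
        simp only [Finset.mem_filter, Finset.mem_product, Finset.mem_univ, and_true] at hs ⊢
        obtain ⟨hx, hgood, hnU⟩ := hs
        rw [hB, Fintype.mem_piFinset] at hx ⊢
        simp only [Finset.mem_range] at hx ⊢
        refine ⟨?_, ?_, ?_⟩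
        · intro i
          have := hx i
          unfold kuhnFlip
          dsimp only
          by_cases h1 : j = 0
          · rw [if_pos h1]
            dsimp only
            split_ifs with h2
            · have : x i + 1 ≠ k := fun h => hnU ⟨h1, by rw [← h2]; simpa using h⟩
              omega
            · omega
          · rw [if_neg h1]
            split_ifs
            · dsimp only
              omega
            · exact this
        · intro a ha
          obtain ⟨l, hl, e⟩ := hgood a ha
          obtain ⟨l', hl', e'⟩ := kuhnFlip_facet x r j (hlast x r j hgood) l hl
          refine ⟨l', hl', ?_⟩
          rw [hf]
          dsimp only
          rw [e']
          exact e
        · rintro ⟨h1, h2⟩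
          revert h1 h2
          unfold kuhnFlip
          dsimp only
          split_ifs with h3 h4
          · intro h; exact absurd h Fin.last_pos.ne'
          · intro _ h
            dsimp only at h
            have e : (r.trans (Equiv.addRight 1)).symm 0 = r.symm (Fin.last n) := by
              rw [Equiv.symm_apply_eq]
              simp
            rw [e] at h
            have h5 := hlast x r j hgood h4 (r.symm (Fin.last n)) (by simp)
            have h6 := hx (r.symm (Fin.last n))
            simp only [Equiv.apply_symm_apply, if_true] at h
            omega
          · intro h; exact absurd h h3
      · rintro ⟨x, r, j⟩ hs
        simp only [Finset.mem_filter, Finset.mem_product, Finset.mem_univ, and_true] at hs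
        exact kuhnFlip_flip x r j (hlast x r j hs.2.1)
    have e3 : ∀ x ∈ B, ∀ r : Equiv.Perm (Fin (n + 1)), OmitsOnlyZero (f x r) 0 →
        x (r.symm 0) + 1 = k → r 0 = 0 := by
      intro x _ r hg hx
      obtain ⟨l, hl, e⟩ := hg 1 (by simp)
      have h1 := hk' (kuhnVertex x r l) (r.symm 0) (by
        have : (l : ℕ) ≠ 0 := fun h => hl (Fin.ext h)
        simp only [kuhnVertex, Equiv.apply_symm_apply, Fin.val_zero]
        split_ifs <;> omega)
      have h2 : (r.symm 0).succ ≤ 1 := by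
        have e' : L (kuhnVertex x r l) = 1 := e
        rwa [e'] at h1
      have h3 : r.symm 0 = 0 := by
        have h4 := Fin.le_def.1 h2
        have h6 : ((1 : Fin (n + 2)) : ℕ) = 1 := rfl
        rw [Fin.val_succ, h6] at h4
        exact Fin.ext (by rw [Fin.val_zero]; omega)
      rw [← h3, Equiv.apply_symm_apply, h3]
    have hpos : ∀ x' : Fin n → ℕ, L (Fin.cons k x') ≠ 0 := fun x' h => by
      have := hk' (Fin.cons k x') 0 rfl
      rw [h] at this
      exact absurd this (by simp)
    have ih := kuhn_sperner hk n (fun x' => (L (Fin.cons k x')).pred (hpos x'))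
      (fun x' i hi h => h0 (Fin.cons k x') i.succ (by simpa using hi)
        (by rw [← h, Fin.succ_pred]))
      (fun x' i hi => by
        rw [Fin.le_pred_iff]
        exact hk' (Fin.cons k x') i.succ (by simpa using hi))
    have hv : ∀ (x' : Fin n → ℕ) (r' : Equiv.Perm (Fin n)) (l : Fin (n + 1)),
        kuhnVertex (Fin.cons (k - 1) x') (Equiv.Perm.decomposeFin.symm (0, r')) l.succ =
          Fin.cons k (kuhnVertex x' r' l) := by
      intro x' r' l
      funext i
      refine Fin.cases ?_ (fun i => ?_) i
      · simp only [kuhnVertex, Fin.cons_zero, Equiv.Perm.decomposeFin_symm_apply_zero,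
          Fin.val_zero, Fin.val_succ]
        split_ifs <;> omega
      · simp [kuhnVertex, Equiv.Perm.decomposeFin_symm_apply_succ]
    have e4 : ∀ (x' : Fin n → ℕ) (r' : Equiv.Perm (Fin n)),
        OmitsOnlyZero (f (Fin.cons (k - 1) x') (Equiv.Perm.decomposeFin.symm (0, r'))) 0 ↔
        Function.Surjective (fun j : Fin (n + 1) =>
          (L (Fin.cons k (kuhnVertex x' r' j))).pred (hpos (kuhnVertex x' r' j))) := by
      intro x' r'
      constructor
      · intro h a
        obtain ⟨l, hl, e⟩ := h a.succ (Fin.succ_ne_zero a)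
        obtain ⟨l, rfl⟩ := Fin.exists_succ_eq.2 hl
        refine ⟨l, ?_⟩
        have e' : L (kuhnVertex _ _ l.succ) = a.succ := e
        rw [hv] at e'
        dsimp only
        rw [Fin.pred_eq_iff_eq_succ, e']
      · intro h a ha
        obtain ⟨a, rfl⟩ := Fin.exists_succ_eq.2 ha
        obtain ⟨l, hl⟩ := h a
        refine ⟨l.succ, Fin.succ_ne_zero l, ?_⟩
        change L (kuhnVertex _ _ l.succ) = a.succ
        rw [hv, ← hl, Fin.succ_pred]
    have e5 : ∑ s ∈ B ×ˢ (Finset.univ : Finset (Equiv.Perm (Fin (n + 1)))),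
        (if OmitsOnlyZero (f s.1 s.2) 0 ∧ s.1 (s.2.symm 0) + 1 = k then (1 : ZMod 2) else 0)
        = 1 := by
      refine Eq.trans ?_ ih
      rw [← Finset.sum_product']
      symm
      refine Finset.sum_of_injOn
        (fun s => (Fin.cons (k - 1) s.1, Equiv.Perm.decomposeFin.symm (0, s.2))) ?_ ?_ ?_ ?_
      · rintro ⟨x, r⟩ _ ⟨x', r'⟩ _ h
        simp only [Prod.mk.injEq] at h
        have h1 := Fin.cons_right_injective (α := fun _ => ℕ) _ h.1
        have h2 := Equiv.Perm.decomposeFin.symm.injective h.2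
        rw [Prod.mk.injEq] at h2 ⊢
        exact ⟨h1, h2.2⟩
      · rintro ⟨x, r⟩ hx
        simp only [Finset.coe_product, Set.mem_prod, Finset.mem_coe, Fintype.mem_piFinset,
          Finset.mem_range, Finset.mem_univ, and_true, hB] at hx ⊢
        intro i
        refine Fin.cases ?_ (fun i => ?_) i
        · rw [Fin.cons_zero]; omega
        · rw [Fin.cons_succ]; exact hx i
      · rintro ⟨x, r⟩ hx hni
        simp only [Finset.mem_product, Finset.mem_univ, and_true] at hx
        refine if_neg fun ⟨hg, hxk⟩ => hni ?_
        have hr := e3 x hx r hg hxk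
        have hr' : r.symm 0 = 0 := by rw [Equiv.symm_apply_eq, hr]
        dsimp only at hxk
        rw [hr'] at hxk
        refine ⟨(Fin.tail x, (Equiv.Perm.decomposeFin r).2), ?_, ?_⟩
        · rw [hB, Fintype.mem_piFinset] at hx
          simp only [Finset.coe_product, Set.mem_prod, Finset.mem_coe, Fintype.mem_piFinset,
            Finset.mem_univ, and_true]
          exact fun i => hx i.succ
        · rw [Prod.mk.injEq]
          constructor
          · rw [show k - 1 = x 0 by omega]
            exact Fin.cons_self_tail x
          · rw [Equiv.symm_apply_eq]
            refine Prod.ext ?_ rfl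
            have : r = Equiv.Perm.decomposeFin.symm (Equiv.Perm.decomposeFin r) := by simp
            rw [this, ← Prod.mk.eta (p := Equiv.Perm.decomposeFin r),
              Equiv.Perm.decomposeFin_symm_apply_zero] at hr
            exact hr.symm
      · rintro ⟨x, r⟩ _
        refine if_congr ?_ rfl rfl
        rw [e4]
        have h1 : (Equiv.Perm.decomposeFin.symm ((0 : Fin (n + 1)), r)).symm 0 = 0 := by
          rw [Equiv.symm_apply_eq, Equiv.Perm.decomposeFin_symm_apply_zero]
        simp only [h1, Fin.cons_zero]
        exact ⟨fun h => ⟨h, by omega⟩, fun h => h.1⟩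
    calc _ = ∑ x ∈ B, ∑ r, ∑ j : Fin (n + 2), (if OmitsOnlyZero (f x r) j then (1 : ZMod 2)
          else 0) := Finset.sum_congr rfl fun x _ => Finset.sum_congr rfl fun r _ => e1 x r
      _ = ∑ x ∈ B, ∑ r, ∑ j : Fin (n + 2), ((if OmitsOnlyZero (f x r) j ∧ ¬ U x r j
            then (1 : ZMod 2) else 0) +
            if j = 0 then if OmitsOnlyZero (f x r) 0 ∧ x (r.symm 0) + 1 = k then 1 else 0
              else 0) := by
          refine Finset.sum_congr rfl fun x _ => Finset.sum_congr rfl fun r _ =>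
            Finset.sum_congr rfl fun j _ => ?_
          by_cases hj : j = 0
          · subst hj
            by_cases h1 : OmitsOnlyZero (f x r) 0 <;> by_cases h2 : x (r.symm 0) + 1 = k <;>
              simp [hU, h1, h2]
          · simp [hU, hj]
      _ = 1 := by
          simp only [Finset.sum_product] at e2 e5
          simp only [Finset.sum_add_distrib, Finset.sum_ite_eq', Finset.mem_univ, if_true]
          rw [e2, e5, zero_add]

/-- The Poincaré–Miranda theorem. -/
theorem poincare_miranda {m : ℕ} (g : (Fin m → ℝ) → Fin m → ℝ) (hg : ContinuousOn g (Icc 0 1))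
    (h0 : ∀ x ∈ Icc (0 : Fin m → ℝ) 1, ∀ i, x i = 0 → g x i < 0)
    (h1 : ∀ x ∈ Icc (0 : Fin m → ℝ) 1, ∀ i, x i = 1 → 0 < g x i) :
    ∃ x ∈ Icc (0 : Fin m → ℝ) 1, g x = 0 := by
  by_contra! hne
  have hcomp : IsCompact (Icc (0 : Fin m → ℝ) 1) := isCompact_Icc
  obtain ⟨x₀, hx₀, hmin⟩ := hcomp.exists_isMinOn ⟨0, by simp⟩ hg.norm
  have hδ : 0 < ‖g x₀‖ := norm_pos_iff.2 (hne x₀ hx₀)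
  obtain ⟨ε, hε, hu⟩ := Metric.uniformContinuousOn_iff.1
    (hcomp.uniformContinuousOn_of_continuous hg) _ hδ
  obtain ⟨k, hk0, hk⟩ : ∃ k : ℕ, 0 < k ∧ 1 / (k : ℝ) < ε := by
    obtain ⟨k, hk⟩ := exists_nat_one_div_lt hε
    exact ⟨k + 1, k.succ_pos, by push_cast; exact hk⟩
  have hkR : (0 : ℝ) < k := by exact_mod_cast hk0
  set c : (Fin m → ℕ) → Fin m → ℝ := fun x i => (min (x i) k : ℕ) / (k : ℝ) with hc
  have hcm : ∀ x, c x ∈ Icc (0 : Fin m → ℝ) 1 := fun x =>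
    ⟨fun i => by positivity, fun i => by
      simp only [hc, Pi.one_apply]
      rw [div_le_one hkR]
      exact_mod_cast min_le_right _ _⟩
  classical
  set L : (Fin m → ℕ) → Fin (m + 1) :=
    fun x => (Finset.univ.filter fun i => 0 < g (c x) i).sup Fin.succ with hL
  have hLs : ∀ x i, L x = i.succ → 0 < g (c x) i := by
    intro x i h
    have hn : (Finset.univ.filter fun i => 0 < g (c x) i).Nonempty := by
      rw [Finset.nonempty_iff_ne_empty]
      intro h'
      rw [hL] at h
      simp only [h', Finset.sup_empty] at h
      exact (Fin.succ_ne_zero i) h.symm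
    obtain ⟨j, hj, e⟩ := Finset.exists_mem_eq_sup _ hn Fin.succ
    have : j = i := Fin.succ_injective _ (e.symm.trans h)
    subst this
    simpa using hj
  have hLle : ∀ x i, 0 < g (c x) i → i.succ ≤ L x := fun x i hi =>
    Finset.le_sup (f := Fin.succ) (by simpa using hi)
  have hS := kuhn_sperner hk0 m L
    (fun x i hi h => by
      have := h0 _ (hcm x) i (by simp [hc, hi])
      exact absurd (hLs x i h) this.not_gt)
    (fun x i hi => hLle x i (h1 _ (hcm x) i (by simp [hc, hi, hkR.ne'])))
  obtain ⟨x, r, hs⟩ : ∃ x r, Function.Surjective fun j : Fin (m + 1) => L (kuhnVertex x r j) := by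
    by_contra! h
    simp [h] at hS
  have hd : ∀ a b : Fin (m + 1), dist (c (kuhnVertex x r a)) (c (kuhnVertex x r b)) < ε := by
    intro a b
    refine lt_of_le_of_lt ((dist_pi_le_iff (by positivity)).2 fun i => ?_) hk
    rw [Real.dist_eq, ← sub_div, abs_div, abs_of_pos hkR]
    gcongr
    have e : ∀ j : ℕ, x i ≤ kuhnVertex x r j i ∧ kuhnVertex x r j i ≤ x i + 1 := fun j => by
      simp only [kuhnVertex]
      split_ifs <;> omega
    obtain ⟨ha, ha'⟩ := e a
    obtain ⟨hb, hb'⟩ := e b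
    rw [abs_le]
    constructor
    · have : (min (kuhnVertex x r b i) k : ℕ) ≤ (min (kuhnVertex x r a i) k : ℕ) + 1 := by omega
      have : ((min (kuhnVertex x r b i) k : ℕ) : ℝ) ≤ (min (kuhnVertex x r a i) k : ℕ) + 1 := by
        exact_mod_cast this
      linarith
    · have : (min (kuhnVertex x r a i) k : ℕ) ≤ (min (kuhnVertex x r b i) k : ℕ) + 1 := by omega
      have : ((min (kuhnVertex x r a i) k : ℕ) : ℝ) ≤ (min (kuhnVertex x r b i) k : ℕ) + 1 := by
        exact_mod_cast this
      linarith
  obtain ⟨a, ha⟩ := hs 0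
  have hle : ∀ i, g (c (kuhnVertex x r a)) i ≤ 0 := fun i => by
    by_contra! h
    have := hLle _ i h
    simp only at ha
    rw [ha] at this
    exact absurd this (by simp)
  refine absurd (isMinOn_iff.1 hmin _ (hcm (kuhnVertex x r a))) (not_le.2 ?_)
  rw [pi_norm_lt_iff hδ]
  intro i
  obtain ⟨b, hb⟩ := hs i.succ
  have hgt := hLs _ _ hb
  have hdi := (dist_pi_lt_iff hδ).1 (hu _ (hcm (kuhnVertex x r b)) _ (hcm (kuhnVertex x r a)) (hd b a)) i
  rw [Real.dist_eq, abs_of_nonneg (by linarith [hle i])] at hdi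
  rw [Real.norm_eq_abs, abs_of_nonpos (hle i)]
  linarith

theorem not_injOn_cube_fin {m : ℕ} {κ : Type*} [Fintype κ] (h : Fintype.card κ < m)
    (f : (Fin m → ℝ) → κ → ℝ) (hf : ContinuousOn f (Icc 0 1)) : ¬ InjOn f (Icc 0 1) := by
  intro hinj
  have hcomp : IsCompact (Icc (0 : Fin m → ℝ) 1) := isCompact_Icc
  set t : (κ → ℝ) → Set (Fin m → ℝ) :=
    fun y => {z | ∀ x ∈ Icc (0 : Fin m → ℝ) 1, f x = y → dist z x < 1 / 8} with ht
  have htc : ∀ y, Convex ℝ (t y) := by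
    intro y
    have : t y = ⋂ x ∈ {x ∈ Icc (0 : Fin m → ℝ) 1 | f x = y}, Metric.ball x (1 / 8) := by
      ext z; simp [ht]
    rw [this]
    exact convex_iInter₂ fun x _ => convex_ball x _
  have hloc : ∀ y : κ → ℝ, ∃ U ∈ 𝓝 y, ∃ g : (κ → ℝ) → Fin m → ℝ,
      ContMDiffOn (modelWithCornersSelf ℝ (κ → ℝ)) (modelWithCornersSelf ℝ (Fin m → ℝ))
        ((1 : ℕ∞) : WithTop ℕ∞) g U ∧ ∀ y' ∈ U, g y' ∈ t y' := by
    intro y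
    have key : ∃ x₀, ∀ x ∈ Icc (0 : Fin m → ℝ) 1, f x = y → x₀ = x := by
      by_cases h : ∃ x₀ ∈ Icc (0 : Fin m → ℝ) 1, f x₀ = y
      · obtain ⟨x₀, hx₀, e⟩ := h
        exact ⟨x₀, fun x hx e' => hinj hx₀ hx (e.trans e'.symm)⟩
      · exact ⟨0, fun x hx e => absurd ⟨x, hx, e⟩ h⟩
    obtain ⟨x₀, hx₀⟩ := key
    have hK : IsCompact (Icc (0 : Fin m → ℝ) 1 ∩ (Metric.ball x₀ (1 / 8))ᶜ) :=
      hcomp.inter_right Metric.isOpen_ball.isClosed_compl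
    have hK' := (hK.image_of_continuousOn (hf.mono inter_subset_left)).isClosed
    refine ⟨_, hK'.isOpen_compl.mem_nhds ?_, fun _ => x₀, contMDiffOn_const, ?_⟩
    · rintro ⟨x, ⟨hx, hx'⟩, e⟩
      apply hx'
      rw [hx₀ x hx e]
      simp
    · intro y' hy' x hx e
      by_contra hd
      refine hy' ⟨x, ⟨hx, fun h => hd ?_⟩, e⟩
      rwa [dist_comm]
  obtain ⟨G, hG⟩ := exists_contMDiffMap_forall_mem_convex_of_local _ htc hloc
  have hGd : ContDiff ℝ 1 G := contMDiff_iff_contDiff.1 G.contMDiff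
  have hdense := hGd.dense_compl_range_of_finrank_lt_finrank (by simpa using h)
  obtain ⟨c, hc, hcd⟩ := hdense.exists_dist_lt (fun _ => 1 / 2 : Fin m → ℝ)
    (by norm_num : (0 : ℝ) < 1 / 8)
  rw [dist_pi_lt_iff (by norm_num)] at hcd
  obtain ⟨x, hx, hz⟩ := poincare_miranda (fun x => G (f x) - c)
    ((hGd.continuous.comp_continuousOn hf).sub continuousOn_const)
    (fun x hx i hi => by
      have h1 := (dist_pi_lt_iff (by norm_num)).1 (hG (f x) x hx rfl) i
      have h2 := hcd i
      rw [Real.dist_eq, abs_lt] at h1 h2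
      simp only [Pi.sub_apply]
      linarith [h1.1, h1.2, h2.1, h2.2])
    (fun x hx i hi => by
      have h1 := (dist_pi_lt_iff (by norm_num)).1 (hG (f x) x hx rfl) i
      have h2 := hcd i
      rw [Real.dist_eq, abs_lt] at h1 h2
      simp only [Pi.sub_apply]
      linarith [h1.1, h1.2, h2.1, h2.2])
  exact hc ⟨f x, sub_eq_zero.1 hz⟩

/-- A cube does not inject continuously into a Euclidean space of smaller dimension. -/
theorem not_injOn_cube {ι κ : Type*} [Fintype ι] [Fintype κ]
    (h : Fintype.card κ < Fintype.card ι)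
    (f : (ι → ℝ) → κ → ℝ) (hf : ContinuousOn f (Icc 0 1)) : ¬ InjOn f (Icc 0 1) := by
  intro hinj
  set e := Fintype.equivFin ι
  have hm : MapsTo (fun (x : Fin (Fintype.card ι) → ℝ) i => x (e i)) (Icc 0 1) (Icc 0 1) :=
    fun x hx => ⟨fun i => hx.1 _, fun i => hx.2 _⟩
  refine not_injOn_cube_fin h (fun x => f fun i => x (e i))
    (hf.comp (by fun_prop) hm) ?_
  intro x hx y hy hxy
  funext i
  have := congrFun (hinj (hm hx) (hm hy) hxy) (e.symm i)
  simpa using this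

section Branching

variable {I : Type*}

/-- `b i j` is the height at which the branches `i` and `j` of a rooted metric tree separate,
and `b i i` is the length of the branch `i`. -/
structure IsBranching (b : I → I → ℝ) : Prop where
  nonneg : ∀ i j, 0 ≤ b i j
  symm : ∀ i j, b i j = b j i
  ultra : ∀ i j k, min (b i k) (b k j) ≤ b i j

/-- No branch is contained in another one. -/
structure IsReducedBranching (b : I → I → ℝ) : Prop extends IsBranching b where
  pos : ∀ i, 0 < b i i
  lt : ∀ i j, i ≠ j → b i j < b i i

theorem IsBranching.le_diag {b : I → I → ℝ} (hb : IsBranching b) (i j : I) : b i j ≤ b i i := by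
  have := hb.ultra i i j
  rwa [hb.symm j i, min_self] at this

/-- The point at height `t` of the branch `i`. -/
def branchPt (b : I → I → ℝ) (i : I) (t : ℝ) : I → ℝ := fun j => min t (b i j)

/-- The rooted tree with branching heights `b`. -/
def branchTree (b : I → I → ℝ) : Set (I → ℝ) :=
  {x | ∃ i t, 0 ≤ t ∧ t ≤ b i i ∧ x = branchPt b i t}

/-- The space of subtrees containing the root, encoded by their heights along the branches. -/
def subtreeSpace (b : I → I → ℝ) : Set (I → ℝ) :=
  {y | ∀ i, 0 ≤ y i ∧ y i ≤ b i i ∧ ∀ j, min (y i) (b i j) ≤ y j}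

theorem branchPt_mem {b : I → I → ℝ} (hb : IsBranching b) (i : I) {t : ℝ} (h0 : 0 ≤ t) :
    branchPt b i t ∈ subtreeSpace b := by
  intro j
  refine ⟨le_min h0 (hb.nonneg _ _), (min_le_right _ _).trans ?_, fun k => ?_⟩
  · rw [hb.symm]; exact hb.le_diag _ _
  · have := hb.ultra i k j
    simp only [branchPt]
    refine le_min ((min_le_left _ _).trans (min_le_left _ _)) (le_trans ?_ this)
    exact min_le_min_right _ (min_le_right _ _)

theorem branchPt_le {b : I → I → ℝ} {y : I → ℝ} (hy : y ∈ subtreeSpace b) {i : I} {t : ℝ}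
    (h : t ≤ y i) : branchPt b i t ≤ y := fun j =>
  (min_le_min_right _ h).trans ((hy i).2.2 j)

theorem inf_mem_subtreeSpace {b : I → I → ℝ} {y z : I → ℝ} (hy : y ∈ subtreeSpace b)
    (hz : z ∈ subtreeSpace b) : y ⊓ z ∈ subtreeSpace b := by
  intro i
  refine ⟨le_min (hy i).1 (hz i).1, (min_le_left _ _).trans (hy i).2.1, fun j => le_min ?_ ?_⟩
  · exact (min_le_min_right _ (min_le_left _ _)).trans ((hy i).2.2 j)
  · exact (min_le_min_right _ (min_le_right _ _)).trans ((hz i).2.2 j)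

theorem sup_mem_subtreeSpace {b : I → I → ℝ} {y z : I → ℝ} (hy : y ∈ subtreeSpace b)
    (hz : z ∈ subtreeSpace b) : y ⊔ z ∈ subtreeSpace b := by
  intro i
  refine ⟨le_max_of_le_left (hy i).1, max_le (hy i).2.1 (hz i).2.1, fun j => ?_⟩
  simp only [Pi.sup_apply]
  rw [min_max_distrib_right]
  exact max_le_max ((hy i).2.2 j) ((hz i).2.2 j)

theorem subtreeSpace_apply_eq {b : I → I → ℝ} (hb : IsBranching b) {y : I → ℝ}
    (hy : y ∈ subtreeSpace b) {i j : I} (h : y i < b i j) : y i = y j := by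
  have h1 := (hy i).2.2 j
  have h2 := (hy j).2.2 i
  rw [min_eq_left h.le] at h1
  rw [hb.symm j i] at h2
  rcases min_le_iff.1 h2 with h2 | h2 <;> linarith

theorem branchRel_symm {b : I → I → ℝ} (hb : IsBranching b) {y : I → ℝ}
    (hy : y ∈ subtreeSpace b) {i j : I} (h : y i < b i j) : y j < b j i := by
  rwa [hb.symm j i, ← subtreeSpace_apply_eq hb hy h]

/-- Two branches are related if they have not separated yet in the subtree `y`. -/
def branchRel {b : I → I → ℝ} (hb : IsBranching b) (y : subtreeSpace b) : Setoid I where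
  r i j := i = j ∨ y.1 i < b i j
  iseqv := by
    refine ⟨fun i => Or.inl rfl, ?_, ?_⟩
    · rintro i j (rfl | h)
      · exact Or.inl rfl
      · exact Or.inr (branchRel_symm hb y.2 h)
    · rintro i j k (rfl | h) (rfl | h')
      · exact Or.inl rfl
      · exact Or.inr h'
      · exact Or.inr h
      · right
        refine lt_of_lt_of_le (lt_min h ?_) (hb.ultra i k j)
        rwa [subtreeSpace_apply_eq hb y.2 h]

theorem branchRel_apply_eq {b : I → I → ℝ} (hb : IsBranching b) (y : subtreeSpace b) {i j : I}
    (h : branchRel hb y i j) : y.1 i = y.1 j := by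
  rcases h with rfl | h
  · rfl
  · exact subtreeSpace_apply_eq hb y.2 h

theorem branchRel_anti {b : I → I → ℝ} (hb : IsBranching b) {y z : subtreeSpace b}
    (h : y ≤ z) : branchRel hb z ≤ branchRel hb y := by
  rintro i j (rfl | h')
  · exact Or.inl rfl
  · exact Or.inr ((h i).trans_lt h')

theorem branchRel_inf {b : I → I → ℝ} (hb : IsBranching b) {y z : subtreeSpace b} {i j : I}
    (h : branchRel hb ⟨y.1 ⊓ z.1, inf_mem_subtreeSpace y.2 z.2⟩ i j) :
    branchRel hb y i j ∨ branchRel hb z i j := by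
  rcases h with rfl | h
  · exact Or.inl (Or.inl rfl)
  · rcases min_lt_iff.1 h with h | h
    · exact Or.inl (Or.inr h)
    · exact Or.inr (Or.inr h)

theorem branchRel_inf_eq {b : I → I → ℝ} (hb : IsBranching b) {y z : subtreeSpace b}
    (h : branchRel hb z ≤ branchRel hb y) :
    branchRel hb ⟨y.1 ⊓ z.1, inf_mem_subtreeSpace y.2 z.2⟩ = branchRel hb y := by
  refine le_antisymm ?_ (branchRel_anti hb (inf_le_left : y.1 ⊓ z.1 ≤ y.1))
  intro i j hij
  rcases branchRel_inf hb hij with h' | h'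
  · exact h'
  · exact h h'

variable [Fintype I]

theorem eventually_branchRel_le {b : I → I → ℝ} (hb : IsBranching b) (y : subtreeSpace b) :
    ∀ᶠ z in 𝓝 y, branchRel hb y ≤ branchRel hb z := by
  have h : ∀ i j, ∀ᶠ z : subtreeSpace b in 𝓝 y, y.1 i < b i j → z.1 i < b i j := by
    intro i j
    by_cases hij : y.1 i < b i j
    · have hc : Continuous fun z : subtreeSpace b => z.1 i :=
        (continuous_apply i).comp continuous_subtype_val
      filter_upwards [hc.continuousAt.eventually_lt continuousAt_const hij] with z hz _
      exact hz
    · exact Filter.Eventually.of_forall fun z h => absurd h hij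
  filter_upwards [Filter.eventually_all.2 fun i => Filter.eventually_all.2 (h i)] with z hz
  rintro i j (rfl | h')
  · exact Or.inl rfl
  · exact Or.inr (hz i j h')

omit [Fintype I] in
theorem Setoid.eq_of_le_of_card_le [Finite I] {r s : Setoid I} (h : r ≤ s)
    (hc : Nat.card (Quotient r) ≤ Nat.card (Quotient s)) : r = s := by
  refine le_antisymm h fun i j hij => ?_
  set f : Quotient r → Quotient s := Quotient.map' id h
  have hs : Function.Surjective f := by
    intro q
    induction q using Quotient.inductionOn with
    | h a => exact ⟨⟦a⟧, rfl⟩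
  have : Function.Injective f :=
    ((Nat.bijective_iff_surjective_and_card f).2 ⟨hs, le_antisymm hc
      (Nat.card_le_card_of_surjective f hs)⟩).1
  exact Quotient.exact (this (a₁ := ⟦i⟧) (a₂ := ⟦j⟧) (Quotient.sound hij))

/-- Near `y` the space of subtrees has dimension at most the number of classes of `y`. -/
theorem exists_injOn_quotient {b : I → I → ℝ} (hb : IsBranching b) (y : subtreeSpace b) :
    ∃ f : subtreeSpace b → Quotient (branchRel hb y) → ℝ, Continuous f ∧
      ∃ N ∈ 𝓝 y, InjOn f N := by
  refine ⟨fun z q => z.1 q.out,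
    continuous_pi fun q => (continuous_apply q.out).comp continuous_subtype_val, _, eventually_branchRel_le hb y, ?_⟩
  intro z hz w hw h
  ext i
  have hi : branchRel hb y (Quotient.out (⟦i⟧ : Quotient (branchRel hb y))) i :=
    Quotient.mk_out i
  rw [← branchRel_apply_eq hb z (hz hi), ← branchRel_apply_eq hb w (hw hi)]
  exact congrFun h ⟦i⟧

open Classical in
/-- Near `y` the space of subtrees has dimension at least the number of classes of `y`. -/
theorem exists_cube_quotient {b : I → I → ℝ} (hb : IsReducedBranching b) (y : subtreeSpace b)
    {N : Set (subtreeSpace b)} (hN : N ∈ 𝓝 y) :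
    ∃ f : (Quotient (branchRel hb.toIsBranching y) → ℝ) → subtreeSpace b, Continuous f ∧
      (∀ t, f t ∈ N) ∧ InjOn f (Icc 0 1) := by
  obtain ⟨η, hη, hball⟩ := Metric.mem_nhds_iff.1 hN
  have hpos : ∀ c : ℝ, 0 < c → ∀ᶠ ε : ℝ in 𝓝[>] 0, ε ≤ c := fun c hc =>
    nhdsWithin_le_nhds (Iic_mem_nhds hc)
  have h1 : ∀ᶠ ε : ℝ in 𝓝[>] 0, ∀ i, (∀ j, i ≠ j → ε ≤ b i i - b i j) ∧ ε ≤ b i i ∧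
      (y.1 i < b i i → ε ≤ b i i - y.1 i) := by
    refine Filter.eventually_all.2 fun i => ((Filter.eventually_all.2 fun j => ?_).and
      ((hpos _ (hb.pos i)).and ?_))
    · by_cases h : i = j
      · simp [h]
      · filter_upwards [hpos _ (sub_pos.2 (hb.lt i j h))] with ε hε _ using hε
    · by_cases h : y.1 i < b i i
      · filter_upwards [hpos _ (sub_pos.2 h)] with ε hε _ using hε
      · simp [h]
  obtain ⟨ε, ⟨hε, hεη⟩, hε0 : 0 < ε⟩ := ((h1.and (hpos (η / 2) (by linarith))).and
    self_mem_nhdsWithin).exists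
  set u : (Quotient (branchRel hb.toIsBranching y) → ℝ) → I → ℝ :=
    fun t i => max 0 (min 1 (t ⟦i⟧)) with hu
  have hu0 : ∀ t i, 0 ≤ u t i := fun t i => le_max_left _ _
  have hu1 : ∀ t i, u t i ≤ 1 := fun t i => max_le zero_le_one (min_le_left _ _)
  have huε : ∀ t i, 0 ≤ ε * u t i ∧ ε * u t i ≤ ε := fun t i =>
    ⟨mul_nonneg hε0.le (hu0 t i), mul_le_of_le_one_right hε0.le (hu1 t i)⟩
  set z : (Quotient (branchRel hb.toIsBranching y) → ℝ) → I → ℝ :=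
    fun t i => if y.1 i < b i i then y.1 i + ε * u t i else y.1 i - ε * u t i with hz
  have hzM : ∀ t, z t ∈ subtreeSpace b := by
    intro t i
    obtain ⟨hy0, hy1, hy2⟩ := y.2 i
    have hi := huε t i
    obtain ⟨hε1, hε2, hε3⟩ := hε i
    refine ⟨?_, ?_, fun j => ?_⟩
    · simp only [hz]
      split_ifs with h
      · linarith
      · linarith
    · simp only [hz]
      split_ifs with h
      · linarith [hε3 h]
      · linarith
    · by_cases hij : i = j
      · subst hij; exact min_le_left _ _
      by_cases hr : y.1 i < b i j
      · have e : (⟦i⟧ : Quotient (branchRel hb.toIsBranching y)) = ⟦j⟧ :=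
          Quotient.sound (Or.inr hr)
        have h1 : y.1 i < b i i := hr.trans_le (hb.le_diag i j)
        have h2 : y.1 j < b j j :=
          (branchRel_symm hb.toIsBranching y.2 hr).trans_le (hb.le_diag j i)
        refine (min_le_left _ _).trans ?_
        simp only [hz]
        rw [if_pos h1, if_pos h2, subtreeSpace_apply_eq hb.toIsBranching y.2 hr]
        simp only [hu, e, le_refl]
      · refine (min_le_right _ _).trans ?_
        have hji : b i j ≤ y.1 j := by
          by_contra! h
          rw [hb.symm] at h
          exact hr (branchRel_symm hb.toIsBranching y.2 h)
        have hj := huε t j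
        simp only [hz]
        split_ifs with h
        · linarith
        · have := (hε j).1 i (Ne.symm hij)
          rw [hb.symm j i] at this
          linarith [not_lt.1 h]
  refine ⟨fun t => ⟨z t, hzM t⟩, ?_, ?_, ?_⟩
  · refine Continuous.subtype_mk (continuous_pi fun i => ?_) _
    simp only [hz, hu]
    split_ifs <;> fun_prop
  · intro t
    apply hball
    rw [Metric.mem_ball]
    refine lt_of_le_of_lt ((dist_pi_le_iff hε0.le).2 fun i => ?_) (show ε < η by linarith)
    rw [Real.dist_eq]
    simp only [hz]
    have hi := huε t i
    split_ifs <;> rw [abs_le] <;> constructor <;> linarith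
  · intro t ht s hs h
    have h' : z t = z s := congrArg Subtype.val h
    funext q
    induction q using Quotient.inductionOn with
    | h i =>
      have h3 := congrFun h' i
      have h4 : u t i = u s i := by
        simp only [hz] at h3
        split_ifs at h3
        · exact mul_left_cancel₀ hε0.ne' (by linarith)
        · exact mul_left_cancel₀ hε0.ne' (by linarith)
      have e : ∀ t ∈ Icc (0 : Quotient (branchRel hb.toIsBranching y) → ℝ) 1,
          u t i = t ⟦i⟧ := fun t ht => by
        have h0 : 0 ≤ t ⟦i⟧ := ht.1 _
        have h1 : t ⟦i⟧ ≤ 1 := ht.2 _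
        simp only [hu]
        rw [min_eq_right h1, max_eq_right h0]
      rwa [e t ht, e s hs] at h4

theorem card_quotient_le_of_homeomorph {I' : Type*} [Fintype I'] {b : I → I → ℝ}
    {b' : I' → I' → ℝ} (hb : IsReducedBranching b) (hb' : IsBranching b')
    (H : subtreeSpace b ≃ₜ subtreeSpace b') (y : subtreeSpace b) :
    Nat.card (Quotient (branchRel hb.toIsBranching y)) ≤
      Nat.card (Quotient (branchRel hb' (H y))) := by
  classical
  obtain ⟨f, hf, N, hN, hinj⟩ := exists_injOn_quotient hb' (H y)
  obtain ⟨g, hg, hgN, hginj⟩ := exists_cube_quotient hb y (H.continuous.continuousAt hN)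
  by_contra! h
  have := Fintype.ofFinite (Quotient (branchRel hb.toIsBranching y))
  have := Fintype.ofFinite (Quotient (branchRel hb' (H y)))
  rw [Nat.card_eq_fintype_card, Nat.card_eq_fintype_card] at h
  refine not_injOn_cube h (fun t => f (H (g t)))
    (hf.comp (H.continuous.comp hg)).continuousOn ?_
  intro s hs t ht hst
  exact hginj hs ht (H.injective (hinj (hgN s) (hgN t) hst))

theorem card_quotient_eq_of_homeomorph {I' : Type*} [Fintype I'] {b : I → I → ℝ}
    {b' : I' → I' → ℝ} (hb : IsReducedBranching b) (hb' : IsReducedBranching b')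
    (H : subtreeSpace b ≃ₜ subtreeSpace b') (y : subtreeSpace b) :
    Nat.card (Quotient (branchRel hb.toIsBranching y)) =
      Nat.card (Quotient (branchRel hb'.toIsBranching (H y))) := by
  refine le_antisymm (card_quotient_le_of_homeomorph hb hb'.toIsBranching H y) ?_
  simpa using card_quotient_le_of_homeomorph hb' hb.toIsBranching H.symm (H y)

end Branching

section Strata

variable {I I' : Type*} [Fintype I] [Fintype I'] {b : I → I → ℝ} {b' : I' → I' → ℝ}

theorem branchRel_homeomorph_le_of_le (hb : IsReducedBranching b) (hb' : IsReducedBranching b')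
    (H : subtreeSpace b ≃ₜ subtreeSpace b') {y z : subtreeSpace b} (hyz : y ≤ z) :
    branchRel hb'.toIsBranching (H z) ≤ branchRel hb'.toIsBranching (H y) := by
  have hw : ∀ t : ℝ, (fun i => min (y.1 i + max t 0) (z.1 i)) ∈ subtreeSpace b := by
    intro t i
    have ht : 0 ≤ max t 0 := le_max_right _ _
    refine ⟨le_min (add_nonneg (y.2 i).1 ht) (z.2 i).1,
      (min_le_right _ _).trans (z.2 i).2.1, fun j => le_min ?_ ?_⟩
    · have h1 := (y.2 i).2.2 j
      rcases min_le_iff.1 h1 with h1 | h1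
      · refine (min_le_left _ _).trans ((min_le_left _ _).trans ?_)
        linarith
      · refine (min_le_right _ _).trans ?_
        linarith
    · exact (min_le_min_right _ (min_le_right _ _)).trans ((z.2 i).2.2 j)
  set w : ℝ → subtreeSpace b := fun t => ⟨_, hw t⟩ with hwdef
  have hwc : Continuous w := Continuous.subtype_mk (by fun_prop) _
  have hmono : ∀ s t, s ≤ t → w s ≤ w t := fun s t h i =>
    min_le_min_right _ (by gcongr)
  have hw0 : w 0 = y := by
    ext i
    simpa [hwdef] using hyz i
  set T : ℝ := ∑ i, z.1 i with hT
  have hT0 : 0 ≤ T := Finset.sum_nonneg fun i _ => (z.2 i).1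
  have hwT : w T = z := by
    ext i
    have h1 : z.1 i ≤ T := Finset.single_le_sum (f := z.1) (fun i _ => (z.2 i).1)
      (Finset.mem_univ i)
    have h2 := (y.2 i).1
    simp only [hwdef]
    rw [max_eq_left hT0]
    exact min_eq_right (by linarith)
  set S : Set ℝ := {t | branchRel hb'.toIsBranching (H (w t)) ≤
    branchRel hb'.toIsBranching (H y)} with hS
  have hHw : Continuous fun t => H (w t) := H.continuous.comp hwc
  have hcl : IsClosed S := by
    rw [← isOpen_compl_iff, isOpen_iff_mem_nhds]
    intro t ht
    filter_upwards [hHw.continuousAt.eventually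
      (eventually_branchRel_le hb'.toIsBranching (H (w t)))] with s hs h
    exact ht (hs.trans h)
  have key := (hcl.inter isClosed_Icc).Icc_subset_of_forall_mem_nhdsWithin (a := 0) (b := T)
    (s := S) (by simp only [hS, mem_ofPred_eq, hw0, le_refl]) ?_
  · have := key (right_mem_Icc.2 hT0)
    rwa [hS, mem_ofPred_eq, hwT] at this
  · rintro t ⟨ht, -⟩
    filter_upwards [nhdsWithin_le_nhds (hwc.continuousAt.eventually
      (eventually_branchRel_le hb.toIsBranching (w t))), nhdsWithin_le_nhds
      (hHw.continuousAt.eventually (eventually_branchRel_le hb'.toIsBranching (H (w t)))),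
      self_mem_nhdsWithin] with s hs hs' hts
    have e : branchRel hb.toIsBranching (w t) = branchRel hb.toIsBranching (w s) :=
      le_antisymm hs (branchRel_anti hb.toIsBranching (hmono t s (le_of_lt hts)))
    have e' : branchRel hb'.toIsBranching (H (w t)) = branchRel hb'.toIsBranching (H (w s)) := by
      refine Setoid.eq_of_le_of_card_le hs' ?_
      rw [← card_quotient_eq_of_homeomorph hb hb' H, ← card_quotient_eq_of_homeomorph hb hb' H, e]
    rw [hS, mem_ofPred_eq, ← e']
    exact ht

theorem branchRel_homeomorph_le (hb : IsReducedBranching b) (hb' : IsReducedBranching b')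
    (H : subtreeSpace b ≃ₜ subtreeSpace b') {y z : subtreeSpace b}
    (h : branchRel hb.toIsBranching z ≤ branchRel hb.toIsBranching y) :
    branchRel hb'.toIsBranching (H z) ≤ branchRel hb'.toIsBranching (H y) := by
  set u : subtreeSpace b := ⟨y.1 ⊓ z.1, inf_mem_subtreeSpace y.2 z.2⟩ with hu
  have hu1 : u ≤ y := (inf_le_left : y.1 ⊓ z.1 ≤ y.1)
  have hu2 : u ≤ z := (inf_le_right : y.1 ⊓ z.1 ≤ z.1)
  have e : branchRel hb.toIsBranching u = branchRel hb.toIsBranching y :=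
    branchRel_inf_eq hb.toIsBranching h
  have e' : branchRel hb'.toIsBranching (H y) = branchRel hb'.toIsBranching (H u) := by
    refine Setoid.eq_of_le_of_card_le (branchRel_homeomorph_le_of_le hb hb' H hu1) ?_
    rw [← card_quotient_eq_of_homeomorph hb hb' H, ← card_quotient_eq_of_homeomorph hb hb' H, e]
  rw [e']
  exact branchRel_homeomorph_le_of_le hb hb' H hu2

theorem branchRel_homeomorph_le_iff (hb : IsReducedBranching b) (hb' : IsReducedBranching b')
    (H : subtreeSpace b ≃ₜ subtreeSpace b') {y z : subtreeSpace b} :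
    branchRel hb'.toIsBranching (H z) ≤ branchRel hb'.toIsBranching (H y) ↔
    branchRel hb.toIsBranching z ≤ branchRel hb.toIsBranching y := by
  refine ⟨fun h => ?_, branchRel_homeomorph_le hb hb' H⟩
  simpa using branchRel_homeomorph_le hb' hb H.symm h

/-- A homeomorphism between spaces of subtrees induces an isomorphism of the posets of strata. -/
theorem exists_orderIso_branchRel (hb : IsReducedBranching b) (hb' : IsReducedBranching b')
    (H : subtreeSpace b ≃ₜ subtreeSpace b') :
    ∃ F : range (branchRel hb.toIsBranching) ≃o range (branchRel hb'.toIsBranching),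
      ∀ S, Nat.card (Quotient (F S).1) = Nat.card (Quotient S.1) := by
  choose s hs using fun S : range (branchRel hb.toIsBranching) => S.2
  choose s' hs' using fun S : range (branchRel hb'.toIsBranching) => S.2
  refine ⟨{ toFun := fun S => ⟨_, H (s S), rfl⟩
            invFun := fun S => ⟨_, H.symm (s' S), rfl⟩
            left_inv := ?_
            right_inv := ?_
            map_rel_iff' := ?_ }, ?_⟩
  · intro S
    ext1
    dsimp only
    have e := hs' ⟨_, H (s S), rfl⟩
    dsimp only at e
    rw [← hs S]
    apply le_antisymm
    · rw [← branchRel_homeomorph_le_iff hb hb' H]; simpa using e.le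
    · rw [← branchRel_homeomorph_le_iff hb hb' H]; simpa using e.ge
  · intro S
    ext1
    dsimp only
    have e := hs ⟨_, H.symm (s' S), rfl⟩
    dsimp only at e
    rw [← hs' S]
    apply le_antisymm
    · rw [← branchRel_homeomorph_le_iff hb' hb H.symm]; simpa using e.le
    · rw [← branchRel_homeomorph_le_iff hb' hb H.symm]; simpa using e.ge
  · intro S S'
    change branchRel hb'.toIsBranching (H (s S)) ≤ branchRel hb'.toIsBranching (H (s S')) ↔
      S.1 ≤ S'.1
    rw [branchRel_homeomorph_le_iff hb hb' H, hs, hs]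
  · intro S
    change Nat.card (Quotient (branchRel hb'.toIsBranching (H (s S)))) = _
    rw [← card_quotient_eq_of_homeomorph hb hb' H, hs]

end Strata

section Poset

variable {I I' : Type*} {b : I → I → ℝ} {b' : I' → I' → ℝ} [Fintype I'] [Fintype I]

/-- A class is nontrivial if it has at least two elements. -/
def IsNontrivialClass {S : Setoid I} (q : Quotient S) : Prop :=
  ∃ i j, i ≠ j ∧ ⟦i⟧ = q ∧ ⟦j⟧ = q

theorem exists_lower_cover (hb : IsBranching b) (S : range (branchRel hb)) {q : Quotient S.1}
    (hq : IsNontrivialClass q) :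
    ∃ T : range (branchRel hb), T ≤ S ∧ (∃ i j, ⟦i⟧ = q ∧ ⟦j⟧ = q ∧ ¬ T.1 i j) ∧
      (∀ U : range (branchRel hb), U ≤ S → U ≤ T ∨ ∀ i j, ⟦i⟧ = q → ⟦j⟧ = q → U.1 i j) ∧
      ∀ i j, S.1 i j → ⟦i⟧ ≠ q → T.1 i j := by
  obtain ⟨S, y, rfl⟩ := S
  obtain ⟨i₀, j₀, hne₀, hi₀, hj₀⟩ := hq
  dsimp only at q hi₀ hj₀
  have : Nonempty {p : I × I // p.1 ≠ p.2 ∧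
    (⟦p.1⟧ : Quotient (branchRel hb y)) = q ∧ (⟦p.2⟧ : Quotient (branchRel hb y)) = q} :=
    ⟨⟨(i₀, j₀), hne₀, hi₀, hj₀⟩⟩
  obtain ⟨⟨⟨i, j⟩, hij, hi, hj⟩, hmin⟩ := Finite.exists_min fun p : {p : I × I // p.1 ≠ p.2 ∧
    (⟦p.1⟧ : Quotient (branchRel hb y)) = q ∧ (⟦p.2⟧ : Quotient (branchRel hb y)) = q} =>
    b p.1.1 p.1.2
  dsimp only at hij hi hj hmin
  have hmin' : ∀ k l : I, (⟦k⟧ : Quotient (branchRel hb y)) = q →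
      (⟦l⟧ : Quotient (branchRel hb y)) = q → b i j ≤ b k l := by
    intro k l hk hl
    by_cases hkl : k = l
    · subst hkl
      by_cases hki : k = i
      · subst hki; exact hb.le_diag _ _
      · exact (hmin ⟨(k, i), hki, hk, hi⟩).trans (hb.le_diag _ _)
    · exact hmin ⟨(k, l), hkl, hk, hl⟩
  have hpt := branchPt_mem hb i (hb.nonneg i j)
  have hyij : y.1 i < b i j := (Quotient.exact (hi.trans hj.symm)).resolve_left hij
  refine ⟨⟨_, ⟨y.1 ⊔ branchPt b i (b i j), sup_mem_subtreeSpace y.2 hpt⟩, rfl⟩,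
    branchRel_anti hb (le_sup_left : y.1 ≤ y.1 ⊔ branchPt b i (b i j)), ⟨i, j, hi, hj, ?_⟩, ?_, ?_⟩
  · rintro (h | h)
    · exact hij h
    · have h2 := (max_lt_iff.1 h).2
      simp only [branchPt] at h2
      rw [min_eq_left (hb.le_diag i j)] at h2
      exact lt_irrefl _ h2
  · rintro ⟨U, z, rfl⟩ hU
    by_cases hall : ∀ k l, (⟦k⟧ : Quotient (branchRel hb y)) = q →
      (⟦l⟧ : Quotient (branchRel hb y)) = q → branchRel hb z k l
    · exact Or.inr hall
    left
    rintro k l (rfl | hkl)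
    · exact Or.inl rfl
    have hykl : branchRel hb y k l := hU (Or.inr hkl)
    rcases hykl with rfl | hykl
    · exact Or.inl rfl
    right
    refine max_lt hykl ?_
    simp only [branchPt]
    by_contra! hc
    apply hall
    obtain ⟨hc1, hc2⟩ := le_min_iff.1 hc
    have hki : (⟦k⟧ : Quotient (branchRel hb y)) = q := by
      rw [← hi]
      refine Quotient.sound (s := branchRel hb y) (Or.inr ?_)
      rw [hb.symm]
      exact hykl.trans_le hc2
    have hzk : z.1 k < b i j := hkl.trans_le hc1
    have hz : ∀ k' : I, (⟦k'⟧ : Quotient (branchRel hb y)) = q → branchRel hb z k k' :=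
      fun k' hk' => Or.inr (hzk.trans_le (hmin' k k' hki hk'))
    exact fun k' l' hk' hl' => (branchRel hb z).trans ((branchRel hb z).symm (hz k' hk')) (hz l' hl')
  · rintro k l (rfl | hkl) hk
    · exact Or.inl rfl
    right
    refine max_lt hkl ?_
    simp only [branchPt]
    refine (min_le_right _ _).trans_lt ?_
    have h1 : b i k ≤ y.1 i := by
      by_contra! h
      exact hk (((Quotient.sound (s := branchRel hb y) (Or.inr h)).symm).trans hi)
    have h2 := (y.2 i).2.2 k
    rw [min_eq_right h1] at h2
    exact h2.trans_lt hkl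

theorem card_lower_covers (hb : IsBranching b) (S : range (branchRel hb)) :
    Nat.card {T : range (branchRel hb) // T ⋖ S} =
      Nat.card {q : Quotient S.1 // IsNontrivialClass q} := by
  choose T hTS hTn hTm hTc using fun q : {q : Quotient S.1 // IsNontrivialClass q} =>
    exists_lower_cover hb S q.2
  have hcov : ∀ q, T q ⋖ S := by
    intro q
    constructor
    · refine lt_of_le_of_ne (hTS q) fun h => ?_
      obtain ⟨i, j, hi, hj, h'⟩ := hTn q
      apply h'
      rw [h]
      exact Quotient.exact (hi.trans hj.symm)
    · intro U hU hUS
      rcases hTm q U hUS.le with h | h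
      · exact hU.not_ge h
      · refine hUS.not_ge ?_
        intro i j hij
        by_cases hi : ⟦i⟧ = q.1
        · exact h i j hi ((Quotient.sound (S.1.symm hij)).trans hi)
        · exact hU.le (hTc q i j hij hi)
  symm
  refine Nat.card_eq_of_bijective (fun q => ⟨T q, hcov q⟩) ⟨?_, ?_⟩
  · intro q q' h
    have h : T q = T q' := congrArg Subtype.val h
    by_contra hne
    obtain ⟨i, j, hi, hj, h'⟩ := hTn q'
    apply h'
    rw [← h]
    refine hTc q i j (Quotient.exact (hi.trans hj.symm)) fun h => hne ?_
    ext1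
    exact h.symm.trans hi
  · rintro ⟨U, hU⟩
    have : ∃ q : {q : Quotient S.1 // IsNontrivialClass q},
        ¬ ∀ i j, ⟦i⟧ = q.1 → ⟦j⟧ = q.1 → U.1 i j := by
      by_contra! h
      refine hU.lt.not_ge ?_
      intro i j hij
      by_cases e : i = j
      · exact e ▸ U.1.refl i
      · exact h ⟨⟦i⟧, i, j, e, rfl, Quotient.sound (S.1.symm hij)⟩ i j rfl
          (Quotient.sound (S.1.symm hij))
    obtain ⟨q, hq⟩ := this
    refine ⟨q, ?_⟩
    ext1
    have h1 : U ≤ T q := (hTm q U hU.le).resolve_right hq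
    exact (hU.eq_or_eq h1 (hTS q)).resolve_right (hcov q).lt.ne

theorem card_singletons_add (S : Setoid I) :
    Nat.card {i // ∀ j, S i j → i = j} + Nat.card {q : Quotient S // IsNontrivialClass q} =
      Nat.card (Quotient S) := by
  classical
  have e1 : Nat.card {i // ∀ j, S i j → i = j} =
      Nat.card {q : Quotient S // ¬ IsNontrivialClass q} := by
    refine Nat.card_eq_of_bijective (fun i => ⟨⟦i.1⟧, ?_⟩) ⟨?_, ?_⟩
    · rintro ⟨k, l, hkl, hk, hl⟩
      exact hkl ((i.2 k (S.symm (Quotient.exact hk))).symm.trans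
        (i.2 l (S.symm (Quotient.exact hl))))
    · intro i j h
      ext1
      exact i.2 j.1 (Quotient.exact (congrArg Subtype.val h))
    · rintro ⟨q, hq⟩
      induction q using Quotient.inductionOn with
      | h i =>
        refine ⟨⟨i, fun j hij => ?_⟩, rfl⟩
        by_contra hne
        exact hq ⟨i, j, hne, rfl, Quotient.sound (S.symm hij)⟩
  rw [e1, add_comm, ← Nat.card_sum]
  exact Nat.card_congr (Equiv.sumCompl _)

/-- The height where the branch `i` leaves the union of the other branches. -/
noncomputable def sepHeight (b : I → I → ℝ) (i : I) : ℝ := ⨆ j : {j // j ≠ i}, b i j.1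

omit [Fintype I] in
theorem sepHeight_nonneg (hb : IsBranching b) (i : I) : 0 ≤ sepHeight b i :=
  Real.iSup_nonneg fun _ => hb.nonneg _ _

theorem le_sepHeight {i j : I} (h : j ≠ i) : b i j ≤ sepHeight b i :=
  le_ciSup (f := fun j : {j // j ≠ i} => b i j) (finite_range _).bddAbove ⟨j, h⟩

/-- The stratum of the segment from the root to the point where the branch `i` separates from
all the other branches. -/
noncomputable def leafRel (hb : IsBranching b) (i : I) : range (branchRel hb) :=
  ⟨_, ⟨_, branchPt_mem hb i (sepHeight_nonneg hb i)⟩, rfl⟩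

theorem le_leafRel_iff (hb : IsBranching b) (S : range (branchRel hb)) (i : I) :
    S ≤ leafRel hb i ↔ ∀ j, S.1 i j → i = j := by
  constructor
  · intro h j hij
    rcases h hij with h | h
    · exact h
    · by_contra hne
      have h1 := le_sepHeight (b := b) (Ne.symm hne)
      refine h.not_ge (le_min h1 (hb.le_diag i j))
  · obtain ⟨S, y, rfl⟩ := S
    intro h
    refine branchRel_anti hb (branchPt_le y.2 (Real.iSup_le ?_ (y.2 i).1))
    rintro ⟨j, hj⟩
    by_contra! h'
    exact hj (h j (Or.inr h')).symm

/-- The stratum of the segment from the root to the separation point of `i` and `j`. -/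
noncomputable def meetRel (hb : IsBranching b) (i j : I) : range (branchRel hb) :=
  ⟨_, ⟨_, branchPt_mem hb i (hb.nonneg i j)⟩, rfl⟩

theorem isLUB_meetRel (hb : IsBranching b) {i j : I} (hij : i ≠ j) :
    IsLUB {leafRel hb i, leafRel hb j} (meetRel hb i j) := by
  have h1 : branchPt b i (b i j) ≤ branchPt b i (sepHeight b i) := fun k =>
    min_le_min_right _ (le_sepHeight hij.symm)
  have h2 : branchPt b i (b i j) ≤ branchPt b j (sepHeight b j) := fun k =>
    le_min ((min_le_left _ _).trans (hb.symm i j ▸ le_sepHeight hij))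
      (by simpa only [branchPt, hb.symm i j] using hb.ultra j k i)
  constructor
  · rintro S (rfl | rfl)
    · exact branchRel_anti hb h1
    · exact branchRel_anti hb h2
  · intro S hS
    have hi : leafRel hb i ≤ S := hS (by simp)
    have hj : leafRel hb j ≤ S := hS (by simp)
    rintro k l (rfl | h)
    · exact S.1.refl k
    · have h3 : min (branchPt b i (sepHeight b i) k) (branchPt b j (sepHeight b j) k) < b k l := by
        refine lt_of_le_of_lt (le_min ?_ ?_) h
        · have := hb.ultra i j k
          refine le_trans ?_ this
          rw [hb.symm k j]
          exact min_le_min (min_le_right _ _) (min_le_right _ _)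
        · exact (min_le_left _ _).trans (min_le_right _ _)
      rcases min_lt_iff.1 h3 with h3 | h3
      · exact hi (Or.inr h3)
      · exact hj (Or.inr h3)

omit [Fintype I] in
theorem meetRel_le_iff (hb : IsBranching b) {i j k : I} (hik : i ≠ k) :
    meetRel hb i j ≤ meetRel hb i k ↔ b i k ≤ b i j := by
  constructor
  · intro h
    by_contra! hlt
    rcases h (Or.inr ((min_le_left _ _).trans_lt hlt) : (meetRel hb i j).1 i k) with h | h
    · exact hik h
    · exact h.not_ge (le_min le_rfl (hb.le_diag i k))
  · intro h
    exact branchRel_anti hb fun l => min_le_min_right _ h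

omit [Fintype I] in
theorem isTop_meetRel_iff (hb : IsBranching b) {i j : I} (hij : i ≠ j) :
    IsTop (meetRel hb i j) ↔ b i j = 0 := by
  have hz : (0 : I → ℝ) ∈ subtreeSpace b := fun k =>
    ⟨le_rfl, hb.nonneg _ _, fun l => min_le_left _ _⟩
  constructor
  · intro h
    by_contra hne
    have hpos : 0 < b i j := lt_of_le_of_ne (hb.nonneg i j) (Ne.symm hne)
    rcases h ⟨_, ⟨0, hz⟩, rfl⟩ (Or.inr hpos : branchRel hb ⟨0, hz⟩ i j) with h | h
    · exact hij h
    · exact h.not_ge (le_min le_rfl (hb.le_diag i j))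
  · rintro h ⟨S, y, rfl⟩
    refine branchRel_anti hb (branchPt_le y.2 ?_)
    rw [h]
    exact (y.2 i).1

omit [Fintype I] in
open Classical in
theorem card_le_eq_add_sum [Finite I] {P : Type*} [PartialOrder P] [Fintype P] (ρ : I → P)
    (a : P) : Nat.card {i // a ≤ ρ i} = Nat.card {i // ρ i = a} +
      ∑ c ∈ Finset.univ.filter (a < ·), Nat.card {i // ρ i = c} := by
  have := Fintype.ofFinite I
  have e : Finset.univ.filter (a ≤ ·) = insert a (Finset.univ.filter (a < ·)) := by
    ext c
    simp [le_iff_eq_or_lt, eq_comm]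
  rw [← Finset.sum_insert (f := fun c => Nat.card {i // ρ i = c}) (by simp), ← e]
  simp only [Nat.card_eq_fintype_card, Fintype.card_subtype]
  rw [Finset.card_eq_sum_card_fiberwise (f := ρ) (t := Finset.univ.filter (a ≤ ·))
    (by intro i hi; simpa using hi)]
  refine Finset.sum_congr rfl fun c hc => ?_
  congr 1
  ext i
  simp only [Finset.mem_filter, Finset.mem_univ, true_and] at hc ⊢
  exact ⟨fun h => h.2, fun h => ⟨h ▸ hc, h⟩⟩

omit [Fintype I] [Fintype I'] in
theorem card_fiber_eq [Finite I] [Finite I'] {P : Type*} [PartialOrder P] [Finite P]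
    (ρ : I → P) (ρ' : I' → P)
    (h : ∀ a, Nat.card {i // a ≤ ρ i} = Nat.card {i // a ≤ ρ' i}) (a : P) :
    Nat.card {i // ρ i = a} = Nat.card {i // ρ' i = a} := by
  classical
  have := Fintype.ofFinite P
  induction a using WellFoundedGT.induction with
  | _ a ih =>
    have h1 := h a
    rw [card_le_eq_add_sum, card_le_eq_add_sum, Finset.sum_congr rfl fun c hc =>
      ih c (Finset.mem_filter.1 hc).2] at h1
    exact Nat.add_right_cancel h1

theorem exists_equiv_of_card_fiber_eq {P : Type*} (ρ : I → P) (ρ' : I' → P)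
    (h : ∀ a, Nat.card {i // ρ i = a} = Nat.card {i // ρ' i = a}) :
    ∃ g : I ≃ I', ∀ i, ρ' (g i) = ρ i := by
  have e : ∀ a, Nonempty ({i // ρ i = a} ≃ {i // ρ' i = a}) := fun a =>
    Finite.card_eq.1 (h a)
  have e := fun a => (e a).some
  refine ⟨(Equiv.sigmaFiberEquiv ρ).symm.trans ((Equiv.sigmaCongrRight e).trans
    (Equiv.sigmaFiberEquiv ρ')), fun i => ?_⟩
  exact (e (ρ i) ⟨i, rfl⟩).2

/-- The space of subtrees determines the relative order of the branching heights. -/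
theorem exists_equiv_of_homeomorph_subtreeSpace (hb : IsReducedBranching b)
    (hb' : IsReducedBranching b') (H : subtreeSpace b ≃ₜ subtreeSpace b') :
    ∃ g : I ≃ I', (∀ i j k, b i j ≤ b i k ↔ b' (g i) (g j) ≤ b' (g i) (g k)) ∧
      ∀ i j, b i j = 0 ↔ b' (g i) (g j) = 0 := by
  obtain ⟨F, hF⟩ := exists_orderIso_branchRel hb hb' H
  have hs : ∀ S, Nat.card {i // ∀ j, S.1 i j → i = j} =
      Nat.card {i // ∀ j, (F S).1 i j → i = j} := by
    intro S
    have h1 := card_singletons_add S.1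
    have h2 := card_singletons_add (F S).1
    rw [hF, ← card_lower_covers hb'.toIsBranching] at h2
    rw [← card_lower_covers hb.toIsBranching] at h1
    have h3 : Nat.card {T // T ⋖ S} = Nat.card {T // T ⋖ F S} :=
      Nat.card_congr (F.toEquiv.subtypeEquiv fun T => (apply_covBy_apply_iff F).symm)
    omega
  have : Finite (Setoid I) := Finite.of_injective (fun S : Setoid I => S.r) fun S T h =>
    Setoid.ext fun i j => iff_of_eq (congrFun (congrFun h i) j)
  obtain ⟨g, hg⟩ := exists_equiv_of_card_fiber_eq (leafRel hb.toIsBranching)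
    (fun i => F.symm (leafRel hb'.toIsBranching i)) (card_fiber_eq _ _ fun S => by
      simp only [F.le_symm_apply, le_leafRel_iff]
      exact hs S)
  have hg' : ∀ i, F (leafRel hb.toIsBranching i) = leafRel hb'.toIsBranching (g i) := by
    intro i
    rw [← hg, F.apply_symm_apply]
  have hmeet : ∀ i j, i ≠ j → F (meetRel hb.toIsBranching i j) =
      meetRel hb'.toIsBranching (g i) (g j) := by
    intro i j hij
    have h1 := isLUB_meetRel hb.toIsBranching hij
    have h2 := isLUB_meetRel hb'.toIsBranching (g.injective.ne hij)
    rw [← F.isLUB_image', image_pair, hg', hg'] at h1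
    exact h1.unique h2
  refine ⟨g, fun i j k => ?_, fun i j => ?_⟩
  · by_cases hij : i = j
    · subst hij
      by_cases hik : i = k
      · subst hik; simp
      · exact iff_of_false (hb.lt i k hik).not_ge
          (hb'.lt _ _ (g.injective.ne hik)).not_ge
    · by_cases hik : i = k
      · subst hik
        exact iff_of_true (hb.le_diag i j) (hb'.le_diag _ _)
      · rw [← meetRel_le_iff hb.toIsBranching hij, ← meetRel_le_iff hb'.toIsBranching
          (g.injective.ne hij), ← hmeet i j hij, ← hmeet i k hik, F.le_iff_le]
  · by_cases hij : i = j
    · subst hij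
      exact iff_of_false (hb.pos i).ne' (hb'.pos _).ne'
    · rw [← isTop_meetRel_iff hb.toIsBranching hij, ← isTop_meetRel_iff hb'.toIsBranching
        (g.injective.ne hij), ← hmeet i j hij]
      refine ⟨fun h T => ?_, fun h T => ?_⟩
      · rw [← F.apply_symm_apply T, F.le_iff_le]
        exact h _
      · rw [← F.le_iff_le]
        exact h _

end Poset

section Normalize

/-- The largest element of `insert 0 H` below `s`. -/
noncomputable def Finset.predOrZero (H : Finset ℝ) (s : ℝ) : ℝ :=
  (insert 0 (H.filter (· < s))).max' (Finset.insert_nonempty _ _)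

theorem Finset.predOrZero_lt (H : Finset ℝ) {s : ℝ} (hs : 0 < s) : H.predOrZero s < s := by
  rw [predOrZero, Finset.max'_lt_iff]
  simp [hs]

theorem Finset.predOrZero_nonneg (H : Finset ℝ) (s : ℝ) : 0 ≤ H.predOrZero s :=
  Finset.le_max' _ _ (by simp)

theorem Finset.le_predOrZero {H : Finset ℝ} {s a : ℝ} (ha : a ∈ H ∨ a = 0) (h : a < s) :
    a ≤ H.predOrZero s := by
  rcases ha with ha | rfl
  · exact Finset.le_max' _ _ (by simp [ha, h])
  · exact H.predOrZero_nonneg s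

theorem Finset.predOrZero_mem (H : Finset ℝ) (s : ℝ) :
    H.predOrZero s = 0 ∨ H.predOrZero s ∈ H ∧ H.predOrZero s < s := by
  have := Finset.max'_mem _ (Finset.insert_nonempty (0 : ℝ) (H.filter (· < s)))
  rw [Finset.mem_insert, Finset.mem_filter] at this
  exact this

/-- The affine map from `[p, s]` to `[0, 1]`, extended by constants. -/
noncomputable def ramp (p s t : ℝ) : ℝ := max 0 (min 1 ((t - p) / (s - p)))

theorem ramp_mono {p s : ℝ} (h : p < s) : Monotone (ramp p s) := fun t t' ht => by
  have : 0 < s - p := sub_pos.2 h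
  unfold ramp
  gcongr

theorem ramp_of_le {p s t : ℝ} (h : p < s) (ht : t ≤ p) : ramp p s t = 0 :=
  max_eq_left ((min_le_right _ _).trans
    (div_nonpos_of_nonpos_of_nonneg (sub_nonpos.2 ht) (sub_pos.2 h).le))

theorem ramp_of_ge {p s t : ℝ} (h : p < s) (ht : s ≤ t) : ramp p s t = 1 := by
  have : 1 ≤ (t - p) / (s - p) := (one_le_div (sub_pos.2 h)).2 (by linarith)
  rw [ramp, min_eq_left this]
  simp

theorem ramp_lt {p s t t' : ℝ} (h : p < s) (hpt : p ≤ t) (hts : t < s) (htt' : t < t') :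
    ramp p s t < ramp p s t' := by
  have hd := sub_pos.2 h
  have h1 : (t - p) / (s - p) < 1 := (div_lt_one hd).2 (by linarith)
  have h0 : 0 ≤ (t - p) / (s - p) := div_nonneg (by linarith) hd.le
  have h2 : (t - p) / (s - p) < (t' - p) / (s - p) := by gcongr
  rw [ramp, ramp, min_eq_right h1.le, max_eq_right h0]
  exact lt_max_of_lt_right (lt_min h1 h2)

/-- The piecewise affine function increasing by one between consecutive elements of
`insert 0 H`. -/
noncomputable def Finset.staircase (H : Finset ℝ) (t : ℝ) : ℝ :=
  ∑ s ∈ H, ramp (H.predOrZero s) s t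

theorem Finset.continuous_staircase (H : Finset ℝ) : Continuous H.staircase := by
  unfold staircase ramp
  fun_prop

theorem Finset.monotone_staircase {H : Finset ℝ} (hH : ∀ s ∈ H, 0 < s) : Monotone H.staircase :=
  fun _ _ h => Finset.sum_le_sum fun s hs => ramp_mono (H.predOrZero_lt (hH s hs)) h

theorem Finset.staircase_lt {H : Finset ℝ} (hH : ∀ s ∈ H, 0 < s) {t t' a : ℝ} (h0 : 0 ≤ t)
    (htt' : t < t') (ha : a ∈ H) (hta : t' ≤ a) : H.staircase t < H.staircase t' := by
  have hne : (H.filter (t < ·)).Nonempty := ⟨a, by simp [ha]; linarith⟩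
  obtain ⟨s, hs, hmin⟩ := Finset.exists_min_image _ id hne
  rw [Finset.mem_filter] at hs
  refine Finset.sum_lt_sum (fun s hs => ramp_mono (H.predOrZero_lt (hH s hs)) htt'.le)
    ⟨s, hs.1, ramp_lt (H.predOrZero_lt (hH s hs.1)) ?_ hs.2 htt'⟩
  rcases H.predOrZero_mem s with h | ⟨h, h'⟩
  · rw [h]; exact h0
  · by_contra! hc
    exact (hmin _ (Finset.mem_filter.2 ⟨h, hc⟩)).not_gt h'

theorem Finset.staircase_eq_card {H : Finset ℝ} (hH : ∀ s ∈ H, 0 < s) {a : ℝ}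
    (ha : a ∈ H ∨ a = 0) : H.staircase a = (H.filter (· ≤ a)).card := by
  rw [Finset.card_filter, Nat.cast_sum]
  refine Finset.sum_congr rfl fun s hs => ?_
  split_ifs with h
  · simpa using ramp_of_ge (H.predOrZero_lt (hH s hs)) h
  · simpa using ramp_of_le (H.predOrZero_lt (hH s hs)) (le_predOrZero ha (not_le.1 h))

theorem Finset.staircase_congr {H H' : Finset ℝ} (hH : ∀ s ∈ H, 0 < s) (hH' : ∀ s ∈ H', 0 < s)
    {a t : ℝ} (ha : a ∈ H ∨ a = 0) (ha' : a ∈ H' ∨ a = 0)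
    (h : H.filter (· ≤ a) = H'.filter (· ≤ a)) (ht : t ≤ a) : H.staircase t = H'.staircase t := by
  have key : ∀ {H : Finset ℝ}, (∀ s ∈ H, 0 < s) → (a ∈ H ∨ a = 0) → H.staircase t =
      ∑ s ∈ H.filter (· ≤ a), ramp ((H.filter (· ≤ a)).predOrZero s) s t := by
    intro H hH ha
    rw [Finset.sum_filter, staircase]
    refine Finset.sum_congr rfl fun s hs => ?_
    split_ifs with h
    · have : (H.filter (· ≤ a)).predOrZero s = H.predOrZero s := by
        unfold predOrZero
        congr 2
        ext x
        simp only [Finset.mem_filter]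
        exact ⟨fun hx => ⟨hx.1.1, hx.2⟩, fun hx => ⟨⟨hx.1, hx.2.le.trans h⟩, hx.2⟩⟩
      rw [this]
    · exact ramp_of_le (H.predOrZero_lt (hH s hs))
        (ht.trans (le_predOrZero ha (not_le.1 h)))
  rw [key hH ha, key hH' ha', h]

variable {I : Type*}

/-- A chart identifies the pointed space `(X, p)` with the rooted tree with heights `b`. -/
structure IsTreeChart {X : Type*} [TopologicalSpace X] (p : X) (b : I → I → ℝ)
    (e : X → I → ℝ) : Prop where
  continuous : Continuous e
  injective : Function.Injective e
  range_eq : range e = branchTree b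
  root : e p = 0

theorem IsTreeChart.exists_homeomorph {X Y : Type*} [TopologicalSpace X] [TopologicalSpace Y]
    [CompactSpace X] [CompactSpace Y] {p : X} {q : Y} {b : I → I → ℝ} {e : X → I → ℝ}
    {e' : Y → I → ℝ} (he : IsTreeChart p b e) (he' : IsTreeChart q b e') :
    ∃ h : X ≃ₜ Y, h p = q := by
  have hce := he.continuous.isClosedEmbedding he.injective
  have hce' := he'.continuous.isClosedEmbedding he'.injective
  set h := (hce.toHomeomorph.trans (Homeomorph.setCongr (he.range_eq.trans he'.range_eq.symm))).trans
    hce'.toHomeomorph.symm with hh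
  refine ⟨h, ?_⟩
  rw [hh, Homeomorph.trans_apply, Homeomorph.symm_apply_eq]
  ext1
  exact he.root.trans he'.root.symm

theorem IsTreeChart.reindex {X : Type*} [TopologicalSpace X] {p : X} {I' : Type*}
    {b : I' → I' → ℝ} {e : X → I' → ℝ} (he : IsTreeChart p b e) (g : I ≃ I') :
    IsTreeChart p (fun i j => b (g i) (g j)) fun x i => e x (g i) := by
  refine ⟨?_, ?_, ?_, ?_⟩
  · exact continuous_pi fun i => (continuous_apply (g i)).comp he.continuous
  · intro x y h
    apply he.injective
    funext i
    simpa using congrFun h (g.symm i)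
  · ext z
    constructor
    · rintro ⟨x, rfl⟩
      obtain ⟨i, t, h0, h1, hx⟩ := he.range_eq.subset ⟨x, rfl⟩
      exact ⟨g.symm i, t, h0, by simpa using h1, by funext j; simp [hx, branchPt]⟩
    · rintro ⟨i, t, h0, h1, rfl⟩
      obtain ⟨x, hx⟩ := he.range_eq.superset ⟨g i, t, h0, h1, rfl⟩
      exact ⟨x, by funext j; simp [hx, branchPt]⟩
  · funext i
    simp [he.root]

variable [Fintype I]

/-- The positive heights occurring on the branch `i`. -/
noncomputable def heights (b : I → I → ℝ) (i : I) : Finset ℝ :=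
  (Finset.univ.image (b i)).filter (0 < ·)

theorem heights_pos (b : I → I → ℝ) (i : I) : ∀ s ∈ heights b i, 0 < s := fun _ hs =>
  (Finset.mem_filter.1 hs).2

theorem mem_heights {b : I → I → ℝ} (hb : IsBranching b) (i j : I) :
    b i j ∈ heights b i ∨ b i j = 0 := by
  rcases (hb.nonneg i j).eq_or_lt with h | h
  · exact Or.inr h.symm
  · exact Or.inl (by simp [heights, h])

/-- The number of heights of the branch `i` up to `b i j`. -/
noncomputable def normHeight (b : I → I → ℝ) (i j : I) : ℝ :=
  ((heights b i).filter (· ≤ b i j)).card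

theorem heights_filter_eq {b : I → I → ℝ} (hb : IsBranching b) (i j : I) :
    (heights b i).filter (· ≤ b i j) = (heights b j).filter (· ≤ b i j) := by
  have key : ∀ i j s, s ∈ heights b i → s ≤ b i j → s ∈ heights b j := by
    intro i j s hs hsj
    simp only [heights, Finset.mem_filter, Finset.mem_image, Finset.mem_univ, true_and] at hs ⊢
    obtain ⟨⟨k, rfl⟩, hpos⟩ := hs
    refine ⟨?_, hpos⟩
    rcases hsj.eq_or_lt with h | h
    · exact ⟨i, by rw [hb.symm j i, h]⟩
    · refine ⟨k, le_antisymm ?_ ?_⟩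
      · have := hb.ultra i k j
        rcases min_le_iff.1 this with h' | h'
        · exact absurd h' h.not_ge
        · exact h'
      · refine le_trans (le_min ?_ le_rfl) (hb.ultra j k i)
        rw [hb.symm j i]; exact h.le
  ext s
  simp only [Finset.mem_filter]
  exact ⟨fun h => ⟨key i j s h.1 h.2, h.2⟩, fun h => ⟨key j i s h.1 (hb.symm i j ▸ h.2), h.2⟩⟩

theorem IsTreeChart.normalize {X : Type*} [TopologicalSpace X] {p : X} {b : I → I → ℝ}
    {e : X → I → ℝ} (hb : IsBranching b) (he : IsTreeChart p b e) :
    IsTreeChart p (normHeight b) fun x i => (heights b i).staircase (e x i) := by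
  have hmono := fun i => Finset.monotone_staircase (heights_pos b i)
  have hval : ∀ i j, (heights b i).staircase (b i j) = normHeight b i j := fun i j =>
    Finset.staircase_eq_card (heights_pos b i) (mem_heights hb i j)
  have hzero : ∀ i, (heights b i).staircase 0 = 0 := by
    intro i
    rw [Finset.staircase_eq_card (heights_pos b i) (Or.inr rfl), Nat.cast_eq_zero,
      Finset.card_eq_zero, Finset.filter_eq_empty_iff]
    exact fun s hs => (heights_pos b i s hs).not_ge
  have hpt : ∀ i t, (fun j => (heights b j).staircase (branchPt b i t j)) =
      branchPt (normHeight b) i ((heights b i).staircase t) := by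
    intro i t
    funext j
    simp only [branchPt]
    rw [← hval, ← (hmono i).map_min]
    refine Finset.staircase_congr (heights_pos b j) (heights_pos b i) (a := b i j) ?_
      (mem_heights hb i j) (heights_filter_eq hb i j).symm (min_le_right _ _)
    rw [hb.symm]
    exact mem_heights hb j i
  refine ⟨?_, ?_, ?_, ?_⟩
  · exact continuous_pi fun i => (Finset.continuous_staircase _).comp
      ((continuous_apply i).comp he.continuous)
  · intro x y hxy
    apply he.injective
    funext i
    have hi := congrFun hxy i
    have hmem : ∀ x, 0 ≤ e x i ∧ e x i ≤ b i i := by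
      intro x
      obtain ⟨j, t, ht, -, hx⟩ := he.range_eq.subset ⟨x, rfl⟩
      rw [hx]
      exact ⟨le_min ht (hb.nonneg _ _), (min_le_right _ _).trans (hb.symm j i ▸ hb.le_diag i j)⟩
    have hlt : ∀ x y, e x i < e y i →
        (heights b i).staircase (e x i) < (heights b i).staircase (e y i) := by
      intro x y h
      refine Finset.staircase_lt (heights_pos b i) (hmem x).1 h
        ((mem_heights hb i i).resolve_right ?_) (hmem y).2
      have := (hmem x).1.trans_lt (h.trans_le (hmem y).2)
      exact this.ne'
    rcases lt_trichotomy (e x i) (e y i) with h | h | h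
    · exact absurd hi (hlt _ _ h).ne
    · exact h
    · exact absurd hi (hlt _ _ h).ne'
  · ext z
    constructor
    · rintro ⟨x, rfl⟩
      obtain ⟨i, t, ht, ht', hx⟩ := he.range_eq.subset ⟨x, rfl⟩
      refine ⟨i, (heights b i).staircase t, ?_, ?_, ?_⟩
      · rw [← hzero i]; exact hmono i ht
      · rw [← hval]; exact hmono i ht'
      · simp only [hx]
        exact hpt i t
    · rintro ⟨i, u, hu, hu', rfl⟩
      have := intermediate_value_Icc (hb.nonneg i i)
        (Finset.continuous_staircase (heights b i)).continuousOn
      rw [hzero, hval] at this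
      obtain ⟨t, ht, rfl⟩ := this ⟨hu, hu'⟩
      obtain ⟨x, hx⟩ := he.range_eq.superset ⟨i, t, ht.1, ht.2, rfl⟩
      refine ⟨x, ?_⟩
      simp only [hx]
      exact hpt i t
  · funext i
    simp [he.root, hzero]

theorem Finset.card_image_le_of_imp {α β γ : Type*} [DecidableEq β] [DecidableEq γ]
    {s : Finset α} {f : α → β} {g : α → γ} (h : ∀ x y, f x = f y → g x = g y) :
    (s.image g).card ≤ (s.image f).card := by
  rcases s.eq_empty_or_nonempty with rfl | ⟨a, -⟩
  · simp
  have : s.image g = (s.image f).image (Function.extend f g fun _ => g a) := by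
    rw [Finset.image_image]
    refine Finset.image_congr fun x _ => ?_
    exact (Function.FactorsThrough.extend_apply (fun x y => h x y) _ x).symm
  rw [this]
  exact Finset.card_image_le

theorem normHeight_congr {b c : I → I → ℝ} (hb : ∀ i j, 0 ≤ b i j) (hc : ∀ i j, 0 ≤ c i j)
    (h : ∀ i j k, b i j ≤ b i k ↔ c i j ≤ c i k) (h0 : ∀ i j, b i j = 0 ↔ c i j = 0) :
    normHeight b = normHeight c := by
  have key : ∀ (b : I → I → ℝ) i j, (heights b i).filter (· ≤ b i j) =
      (Finset.univ.filter fun k => 0 < b i k ∧ b i k ≤ b i j).image (b i) := by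
    intro b i j
    ext s
    simp only [heights, Finset.mem_filter, Finset.mem_image, Finset.mem_univ, true_and]
    constructor
    · rintro ⟨⟨⟨k, rfl⟩, h1⟩, h2⟩
      exact ⟨k, ⟨h1, h2⟩, rfl⟩
    · rintro ⟨k, ⟨h1, h2⟩, rfl⟩
      exact ⟨⟨⟨k, rfl⟩, h1⟩, h2⟩
  funext i j
  rw [normHeight, normHeight, key, key, Nat.cast_inj]
  have e : (Finset.univ.filter fun k => 0 < b i k ∧ b i k ≤ b i j) =
      Finset.univ.filter fun k => 0 < c i k ∧ c i k ≤ c i j := by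
    ext k
    simp only [Finset.mem_filter, Finset.mem_univ, true_and, h i k j,
      (hb i k).lt_iff_ne', (hc i k).lt_iff_ne', ne_eq, h0 i k]
  rw [e]
  have hbc : ∀ x y, b i x = b i y ↔ c i x = c i y := fun x y => by
    rw [le_antisymm_iff, le_antisymm_iff, h, h]
  exact le_antisymm (Finset.card_image_le_of_imp fun x y => (hbc x y).2)
    (Finset.card_image_le_of_imp fun x y => (hbc x y).1)

end Normalize

section Hyperspace

variable {I : Type*} {b : I → I → ℝ}

theorem branchPt_congr (hb : IsBranching b) {i k : I} {t : ℝ} (h : t ≤ b i k) :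
    branchPt b i t = branchPt b k t := by
  funext j
  refine le_antisymm (le_min (min_le_left _ _) ?_) (le_min (min_le_left _ _) ?_)
  · exact (min_le_min_right _ (hb.symm i k ▸ h)).trans (hb.ultra k j i)
  · exact (min_le_min_right _ h).trans (hb.ultra i j k)

theorem branchPt_self {i : I} {t : ℝ} (h : t ≤ b i i) : branchPt b i t i = t := min_eq_left h

theorem continuous_branchPt (b : I → I → ℝ) (i : I) : Continuous (branchPt b i) :=
  continuous_pi fun _ => continuous_id.min continuous_const

theorem branchPt_zero (hb : IsBranching b) (i : I) : branchPt b i 0 = 0 :=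
  funext fun j => min_eq_left (hb.nonneg i j)

theorem branchTree_subset (hb : IsBranching b) : branchTree b ⊆ subtreeSpace b := by
  rintro _ ⟨i, t, h0, -, rfl⟩
  exact branchPt_mem hb i h0

theorem le_of_lt_of_mem_branchTree (hb : IsBranching b) {x : I → ℝ} (hx : x ∈ branchTree b)
    {i j : I} (h : b i j < x j) : x i ≤ b i j := by
  obtain ⟨k, r, -, -, rfl⟩ := hx
  have h1 := hb.ultra i j k
  simp only [branchPt, lt_min_iff, min_le_iff, hb.symm i k] at *
  rcases h1 with h1 | h1
  · exact Or.inr h1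
  · exact absurd h.2 h1.not_gt

theorem eq_of_mem_branchTree (hb : IsBranching b) {x : I → ℝ} (hx : x ∈ branchTree b) {i : I}
    (h : ∀ j, b i j ≤ x i → x j ≤ b i j) : x = branchPt b i (x i) := by
  obtain ⟨k, r, h0, h1, rfl⟩ := hx
  rcases le_total r (b k i) with hr | hr
  · rw [show branchPt b k r i = r from min_eq_left hr, branchPt_congr hb hr]
  · have hi : branchPt b k r i = b k i := min_eq_right hr
    have := h k (by rw [hi, hb.symm])
    rw [branchPt_self h1, hb.symm] at this
    obtain rfl := le_antisymm this hr
    rw [hi, ← branchPt_congr hb le_rfl]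

variable {X : Type*} [TopologicalSpace X] {p : X} {e : X → I → ℝ}

theorem IsTreeChart.mem (he : IsTreeChart p b e) (x : X) : e x ∈ branchTree b :=
  he.range_eq ▸ mem_range_self x

theorem IsTreeChart.mem_of_le [Finite I] (hb : IsBranching b) (he : IsTreeChart p b e) {A : Set X}
    (hA : IsPreconnected A) (hp : p ∈ A) {x z : X} (hx : x ∈ A) {i : I} {s t : ℝ}
    (hex : e x = branchPt b i t) (ht : t ≤ b i i) (hez : e z = branchPt b i s) (hs : 0 ≤ s)
    (hst : s ≤ t) : z ∈ A := by
  by_contra hz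
  have hs0 : 0 < s := by
    refine hs.lt_of_ne fun h => hz ?_
    rwa [he.injective (a₁ := z) (a₂ := p)]
    rw [hez, ← h, branchPt_zero hb, he.root]
  have hst' : s < t := by
    refine hst.lt_of_ne fun h => hz ?_
    rwa [he.injective (a₁ := z) (a₂ := x)]
    rw [hez, hex, h]
  have hc : ∀ j, Continuous fun x => e x j := fun j => (continuous_apply j).comp he.continuous
  let U : Set X := {x | s < e x i}
  let V : Set X := {x | e x i < s} ∪ ⋃ j ∈ {j | b i j ≤ s}, {x | b i j < e x j}
  have hU : IsOpen U := isOpen_lt continuous_const (hc i)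
  have hV : IsOpen V := (isOpen_lt (hc i) continuous_const).union
    (isOpen_biUnion fun j _ => isOpen_lt continuous_const (hc j))
  have hcover : A ⊆ U ∪ V := by
    intro w hw
    rcases lt_trichotomy (e w i) s with h | h | h
    · exact Or.inr (Or.inl h)
    · by_contra hn
      simp only [U, V, mem_union, mem_iUnion, not_or, not_exists] at hn
      refine hz ?_
      rwa [he.injective (a₁ := z) (a₂ := w)]
      rw [eq_of_mem_branchTree hb (he.mem w) (i := i), hez, h]
      intro j hj
      exact not_lt.1 (hn.2.2 j (hj.trans h.le))
    · exact Or.inl h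
  have hxU : s < e x i := by rwa [hex, branchPt_self ht]
  have hpV : e p i < s := by simpa [he.root] using hs0
  obtain ⟨w, -, hwU, hwV⟩ := hA U V hU hV hcover ⟨x, hx, hxU⟩ ⟨p, hp, Or.inl hpV⟩
  have hsw : s < e w i := hwU
  rcases hwV with h | h
  · exact lt_asymm h hsw
  · simp only [mem_iUnion] at h
    obtain ⟨j, hj, h⟩ := h
    exact ((le_of_lt_of_mem_branchTree hb (he.mem w) h).trans hj).not_gt hsw

/-- The points of the tree lying below `y`. -/
theorem IsTreeChart.isConnected_preimage_Iic [CompactSpace X] (hb : IsBranching b)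
    (he : IsTreeChart p b e) {y : I → ℝ} (hy : y ∈ subtreeSpace b) :
    IsConnected (e ⁻¹' Iic y) := by
  have hp : p ∈ e ⁻¹' Iic y := by
    rw [mem_preimage, he.root]
    exact fun i => (hy i).1
  refine ⟨⟨p, hp⟩, ?_⟩
  rw [← (he.continuous.isClosedEmbedding he.injective).isInducing.isPreconnected_image]
  refine isPreconnected_of_forall 0 ?_
  rintro _ ⟨x, hx, rfl⟩
  obtain ⟨i, t, h0, h1, hxt⟩ := he.mem x
  refine ⟨branchPt b i '' Icc 0 t, ?_, ⟨0, left_mem_Icc.2 h0, branchPt_zero hb i⟩,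
    ⟨t, right_mem_Icc.2 h0, hxt.symm⟩,
    isPreconnected_Icc.image _ (continuous_branchPt b i).continuousOn⟩
  rintro _ ⟨s, hs, rfl⟩
  obtain ⟨z, hz⟩ := he.range_eq.superset ⟨i, s, hs.1, hs.2.trans h1, rfl⟩
  refine ⟨z, ?_, hz⟩
  rw [mem_preimage, hz]
  refine branchPt_le hy (hs.2.trans ?_)
  have := hx i
  rwa [hxt, branchPt_self h1] at this

theorem IsTreeChart.exists_eq_preimage_Iic [Finite I] (hb : IsBranching b)
    (he : IsTreeChart p b e) {A : Set X} (hA : IsCompact A) (hA' : IsPreconnected A)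
    (hp : p ∈ A) : ∃ y ∈ subtreeSpace b, e ⁻¹' Iic y = A := by
  have hmax : ∀ i, ∃ a ∈ A, ∀ x ∈ A, e x i ≤ e a i := fun i =>
    hA.exists_isMaxOn ⟨p, hp⟩ ((continuous_apply i).comp he.continuous).continuousOn
  choose a ha hmax using hmax
  refine ⟨fun i => e (a i) i, fun i => ?_, ?_⟩
  · have := branchTree_subset hb (he.mem (a i)) i
    exact ⟨this.1, this.2.1, fun j => (this.2.2 j).trans (hmax j _ (ha i))⟩
  · ext x
    refine ⟨fun hx => ?_, fun hx i => hmax i x hx⟩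
    obtain ⟨i, t, h0, h1, hxt⟩ := he.mem x
    obtain ⟨k, r, -, hr, hk⟩ := he.mem (a i)
    have h := hx i
    simp only [hxt, branchPt_self h1, hk] at h
    have h2 : t ≤ b k i := h.trans (min_le_right _ _)
    refine he.mem_of_le hb hA' hp (ha i) hk hr ?_ h0 (h.trans (min_le_left _ _))
    rw [hxt, branchPt_congr hb (hb.symm k i ▸ h2)]

theorem preimage_Iic_injOn (he : IsTreeChart p b e) :
    InjOn (fun y => e ⁻¹' Iic y) (subtreeSpace b) := by
  have key : ∀ y ∈ subtreeSpace b, ∀ z ∈ subtreeSpace b, e ⁻¹' Iic y = e ⁻¹' Iic z → y ≤ z := by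
    intro y hy z hz h i
    obtain ⟨x, hx⟩ := he.range_eq.superset ⟨i, y i, (hy i).1, (hy i).2.1, rfl⟩
    have hxy : x ∈ e ⁻¹' Iic y := by
      rw [mem_preimage, hx]
      exact branchPt_le hy le_rfl
    rw [h] at hxy
    have := hxy i
    rwa [hx, branchPt_self (hy i).2.1] at this
  exact fun y hy z hz h => le_antisymm (key y hy z hz h) (key z hz y hy h.symm)

end Hyperspace

section Homeomorph

theorem IsTreeChart.exists_dist_lt {I : Type*} [Fintype I] {b : I → I → ℝ} {X : Type*}
    [MetricSpace X] [CompactSpace X] {p : X} {e : X → I → ℝ} (he : IsTreeChart p b e) {ε : ℝ}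
    (hε : 0 < ε) : ∃ δ > 0, ∀ x z, dist (e x) (e z) < δ → dist x z < ε := by
  have hce := he.continuous.isClosedEmbedding he.injective
  have : CompactSpace (range e) := isCompact_iff_compactSpace.1 (isCompact_range he.continuous)
  have hu := CompactSpace.uniformContinuous_of_continuous hce.toHomeomorph.symm.continuous
  obtain ⟨δ, hδ, h⟩ := Metric.uniformContinuous_iff.1 hu ε hε
  refine ⟨δ, hδ, fun x z hxz => ?_⟩
  simpa using h (a := hce.toHomeomorph x) (b := hce.toHomeomorph z) hxz

theorem isCompact_subtreeSpace {I : Type*} (b : I → I → ℝ) : IsCompact (subtreeSpace b) := by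
  refine (isCompact_Icc (a := (0 : I → ℝ)) (b := fun i => b i i)).of_isClosed_subset ?_
    fun y hy => ⟨fun i => (hy i).1, fun i => (hy i).2.1⟩
  have : subtreeSpace b = ⋂ i, {y | 0 ≤ y i} ∩ ({y | y i ≤ b i i} ∩
      ⋂ j, {y | min (y i) (b i j) ≤ y j}) := by
    ext y
    simp [subtreeSpace]
  rw [this]
  refine isClosed_iInter fun i => (isClosed_le ?_ ?_).inter ((isClosed_le ?_ ?_).inter
    (isClosed_iInter fun j => isClosed_le ?_ ?_)) <;> fun_prop

theorem IsTreeChart.nonempty_homeomorph_CP {I : Type*} [Fintype I] {b : I → I → ℝ} {X : Type u} [MetricSpace X] [CompactSpace X] {p : X}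
    {e : X → I → ℝ} (hb : IsBranching b) (he : IsTreeChart p b e) :
    Nonempty (subtreeSpace b ≃ₜ CP X p) := by
  have : CompactSpace (subtreeSpace b) := isCompact_iff_compactSpace.1 (isCompact_subtreeSpace b)
  have hcon := fun y : subtreeSpace b => he.isConnected_preimage_Iic hb y.2
  let Θ : subtreeSpace b → CP X p := fun y =>
    ⟨⟨⟨e ⁻¹' Iic y.1, (isClosed_Iic.preimage he.continuous).isCompact⟩, (hcon y).nonempty⟩, hcon y,
      by
        change p ∈ e ⁻¹' Iic y.1
        rw [mem_preimage, he.root]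
        exact fun i => (y.2 i).1⟩
  have hinj : Function.Injective Θ := by
    intro y z h
    have : (Θ y).set = (Θ z).set := by rw [h]
    exact Subtype.ext (preimage_Iic_injOn he y.2 z.2 this)
  have hsurj : Function.Surjective Θ := by
    intro A
    obtain ⟨y, hy, h⟩ := he.exists_eq_preimage_Iic hb A.1.isCompact A.2.1.isPreconnected A.2.2
    exact ⟨⟨y, hy⟩, Subtype.ext (NonemptyCompacts.ext h)⟩
  have hcont : Continuous Θ := by
    rw [Metric.continuous_iff]
    intro y ε hε
    obtain ⟨δ, hδ, h⟩ := he.exists_dist_lt (half_pos hε)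
    have key : ∀ y z : subtreeSpace b, dist y z < δ → ∀ x ∈ e ⁻¹' Iic y.1,
        ∃ w ∈ e ⁻¹' Iic z.1, dist x w ≤ ε / 2 := by
      intro y z hyz x hx
      obtain ⟨i, t, h0, h1, hxt⟩ := he.mem x
      have hty : t ≤ y.1 i := by
        have := hx i
        rwa [hxt, branchPt_self h1] at this
      obtain ⟨w, hw⟩ := he.range_eq.superset ⟨i, min t (z.1 i), le_min h0 (z.2 i).1,
        (min_le_left _ _).trans h1, rfl⟩
      refine ⟨w, ?_, (h x w ?_).le⟩
      · rw [mem_preimage, hw]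
        exact branchPt_le z.2 (min_le_right _ _)
      · refine lt_of_le_of_lt ?_ hyz
        rw [dist_pi_le_iff dist_nonneg]
        intro j
        have hyzi : |y.1 i - z.1 i| ≤ dist y z := dist_le_pi_dist y.1 z.1 i
        rw [hxt, hw]
        refine le_trans ?_ hyzi
        simp only [branchPt, Real.dist_eq]
        refine (abs_min_sub_min_le_max _ _ _ _).trans (max_le ?_ (by simp))
        rw [abs_of_nonneg (sub_nonneg.2 (min_le_left _ _))]
        rcases le_total t (z.1 i) with h' | h'
        · simp [min_eq_left h']
        · rw [min_eq_right h']
          exact (sub_le_sub_right hty _).trans (le_abs_self _)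
    refine ⟨δ, hδ, fun z hz => lt_of_le_of_lt ?_ (half_lt_self hε)⟩
    refine Metric.hausdorffDist_le_of_mem_dist (half_pos hε).le (key z y hz)
      (key y z (by rwa [dist_comm]))
  exact ⟨hcont.homeoOfEquivCompactToT2 (f := Equiv.ofBijective Θ ⟨hinj, hsurj⟩)⟩

end Homeomorph

section Arcs

variable {X : Type*} [TopologicalSpace X]

/-- `τ` restricts to a homeomorphism from the arc `A` onto `[0, 1]`. -/
structure IsArcCoord (A : Set X) (τ : X → ℝ) : Prop where
  continuousOn : ContinuousOn τ A
  injOn : InjOn τ A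
  image_eq : τ '' A = Icc 0 1

theorem IsArcCoord.mem {A : Set X} {τ : X → ℝ} (h : IsArcCoord A τ) {x : X} (hx : x ∈ A) :
    τ x ∈ Icc (0 : ℝ) 1 :=
  h.image_eq ▸ mem_image_of_mem τ hx

theorem IsArcCoord.reverse {A : Set X} {τ : X → ℝ} (h : IsArcCoord A τ) :
    IsArcCoord A fun x => 1 - τ x := by
  refine ⟨continuousOn_const.sub h.continuousOn, fun x hx y hy hxy => h.injOn hx hy ?_, ?_⟩
  · simpa using hxy
  · have : (fun x => 1 - τ x) '' A = (fun t => 1 - t) '' (τ '' A) := (image_image _ _ _).symm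
    rw [this, h.image_eq]
    simp

theorem isArcCoord_of_image_eq {A : Set X} {τ : X → ℝ} {r s : ℝ} (hrs : r < s)
    (hc : ContinuousOn τ A) (hi : InjOn τ A) (him : τ '' A = Icc r s) :
    IsArcCoord A fun x => (τ x - r) / (s - r) := by
  have h0 : 0 < s - r := sub_pos.2 hrs
  refine ⟨(hc.sub continuousOn_const).div_const _, fun x hx y hy hxy => hi hx hy ?_, ?_⟩
  · simpa [div_left_inj' h0.ne'] using hxy
  · have : (fun x => (τ x - r) / (s - r)) '' A = (fun t => (t - r) / (s - r)) '' (τ '' A) :=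
      (image_image (fun t => (t - r) / (s - r)) τ A).symm
    rw [this, him]
    ext t
    constructor
    · rintro ⟨u, hu, rfl⟩
      exact ⟨div_nonneg (by linarith [hu.1]) h0.le, (div_le_one h0).2 (by linarith [hu.2])⟩
    · rintro ⟨ht0, ht1⟩
      refine ⟨r + t * (s - r), ⟨by nlinarith, by nlinarith⟩, ?_⟩
      field_simp
      ring

theorem isArcCoord_of_homeomorph {A : Set X} (h : ↥A ≃ₜ ↥(Icc (0 : ℝ) 1)) :
    ∃ τ, IsArcCoord A τ ∧ ∀ a : A, τ a = h a := by
  classical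
  refine ⟨fun x => if hx : x ∈ A then h ⟨x, hx⟩ else 0, ⟨?_, ?_, ?_⟩, fun a => by simp⟩
  · rw [continuousOn_iff_continuous_domRestrict]
    convert continuous_subtype_val.comp h.continuous using 1
    funext a
    simp
  · intro x hx y hy hxy
    simp only [hx, hy, dif_pos] at hxy
    simpa using h.injective (Subtype.ext hxy)
  · ext t
    constructor
    · rintro ⟨x, hx, rfl⟩
      simp only [hx, dif_pos]
      exact (h ⟨x, hx⟩).2
    · intro ht
      exact ⟨h.symm ⟨t, ht⟩, (h.symm ⟨t, ht⟩).2, by simp⟩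

theorem IsArcSet.exists_isArcCoord {A : Set X} (hA : IsArcSet A) : ∃ τ, IsArcCoord A τ := by
  obtain ⟨h⟩ := hA
  obtain ⟨τ, hτ, -⟩ := isArcCoord_of_homeomorph h
  exact ⟨τ, hτ⟩

theorem IsArcSet.isCompact {A : Set X} (hA : IsArcSet A) : IsCompact A := by
  obtain ⟨h⟩ := hA
  exact isCompact_iff_compactSpace.2 h.symm.compactSpace

theorem IsArcEndpoint.exists_isArcCoord {A : Set X} {x : X} (hx : IsArcEndpoint A x) :
    ∃ τ, IsArcCoord A τ ∧ τ x = 0 := by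
  obtain ⟨-, h, rfl, -⟩ := hx
  obtain ⟨τ, hτ, h'⟩ := isArcCoord_of_homeomorph h.symm
  exact ⟨τ, hτ, by simp [h']⟩

theorem IsArcEndpoint.isPreconnected_diff {A : Set X} {x : X} (hx : IsArcEndpoint A x) :
    IsPreconnected (A \ {x}) := by
  obtain ⟨-, h, rfl, -⟩ := hx
  have : A \ {(h ⟨0, by norm_num⟩ : X)} =
      (fun t : ℝ => (h (projIcc 0 1 zero_le_one t) : X)) '' Ioc 0 1 := by
    ext y
    constructor
    · rintro ⟨hy, hne⟩
      have h1 := (h.symm ⟨y, hy⟩).2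
      refine ⟨h.symm ⟨y, hy⟩, ⟨h1.1.lt_of_ne fun h0 => hne ?_, h1.2⟩, by simp⟩
      have : (⟨0, by norm_num⟩ : Icc (0 : ℝ) 1) = h.symm ⟨y, hy⟩ := Subtype.ext h0
      rw [this]
      simp
    · rintro ⟨t, ht, rfl⟩
      refine ⟨Subtype.property _, fun h0 => ?_⟩
      have := h.injective (Subtype.ext h0)
      rw [projIcc_of_mem _ (Ioc_subset_Icc_self ht)] at this
      exact ht.1.ne' (congrArg Subtype.val this)
  rw [this]
  exact isPreconnected_Ioc.image _
    (continuous_subtype_val.comp (h.continuous.comp continuous_projIcc)).continuousOn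

theorem IsArcCoord.eq_zero_or_one {A : Set X} {τ : X → ℝ} (h : IsArcCoord A τ) {x : X}
    (hxA : x ∈ A) (hx : IsArcEndpoint A x) : τ x = 0 ∨ τ x = 1 := by
  by_contra! hne
  have hm := h.mem hxA
  have hc := (hx.isPreconnected_diff.image τ (h.continuousOn.mono sdiff_subset)).ordConnected
  have hsub : τ '' (A \ {x}) = Icc 0 1 \ {τ x} := by
    rw [h.injOn.image_sdiff_subset (singleton_subset_iff.2 hxA), h.image_eq, image_singleton]
  rw [hsub] at hc
  have := hc.out (x := 0) ⟨by norm_num, hne.1.symm⟩ (y := 1) ⟨by norm_num, hne.2.symm⟩ hm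
  exact this.2 rfl

/-- Two arcs meeting in their end points form a simple closed curve. -/
theorem IsArcCoord.isSimpleClosedCurve [T2Space X] {A B : Set X} {τ σ : X → ℝ} {x y : X}
    (hA : IsArcCoord A τ) (hB : IsArcCoord B σ) (hcA : IsCompact A) (hcB : IsCompact B)
    (hAB : A ∩ B = {x, y}) (hτx : τ x = 0) (hσx : σ x = 0) (hτy : τ y = 1) (hσy : σ y = 1) :
    IsSimpleClosedCurve (A ∪ B) := by
  classical
  have hπ := Real.pi_pos
  have hxAB : x ∈ A ∩ B := hAB ▸ mem_insert _ _
  have hyAB : y ∈ A ∩ B := hAB ▸ mem_insert_of_mem _ rfl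
  let f : X → Circle := fun z => if z ∈ A then Circle.exp (Real.pi * τ z) else
    Circle.exp (-(Real.pi * σ z))
  have hfA : ∀ z ∈ A, f z = Circle.exp (Real.pi * τ z) := fun z hz => if_pos hz
  have hfB : ∀ z ∈ B, f z = Circle.exp (-(Real.pi * σ z)) := by
    intro z hz
    by_cases hzA : z ∈ A
    · have : z ∈ ({x, y} : Set X) := hAB ▸ ⟨hzA, hz⟩
      rcases this with rfl | rfl
      · rw [hfA z hzA, hτx, hσx]
        simp
      · rw [hfA z hzA, hτy, hσy]
        ext
        simp [Circle.coe_exp]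
    · exact if_neg hzA
  have hσ : ∀ z ∈ B, z ∉ A → 0 < σ z ∧ σ z < 1 := by
    intro z hz hzA
    have := hB.mem hz
    refine ⟨this.1.lt_of_ne fun h => hzA ?_, this.2.lt_of_ne fun h => hzA ?_⟩
    · rw [hB.injOn hz hxAB.2 (by rw [hσx, h])]; exact hxAB.1
    · rw [hB.injOn hz hyAB.2 (by rw [hσy, h])]; exact hyAB.1
  have hargA : ∀ z ∈ A, Complex.arg (f z) = Real.pi * τ z := by
    intro z hz
    have := hA.mem hz
    rw [hfA z hz, Circle.arg_exp] <;> nlinarith [this.1, this.2]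
  have hargB : ∀ z ∈ B, z ∉ A → Complex.arg (f z) = -(Real.pi * σ z) := by
    intro z hz hzA
    have := hσ z hz hzA
    rw [hfB z hz, Circle.arg_exp] <;> nlinarith [this.1, this.2]
  have hcont : ContinuousOn f (A ∪ B) := by
    refine ContinuousOn.union_of_isClosed ?_ ?_ hcA.isClosed hcB.isClosed
    · exact (Circle.exp.continuous.comp_continuousOn
        (continuousOn_const.mul hA.continuousOn)).congr hfA
    · exact (Circle.exp.continuous.comp_continuousOn
        (continuousOn_const.mul hB.continuousOn).neg).congr hfB
  have hinj : InjOn f (A ∪ B) := by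
    have hAne : ∀ z ∈ A, ∀ w ∈ B, w ∉ A → f z ≠ f w := by
      intro z hz w hw hwA h
      have h1 := hargA z hz
      rw [h, hargB w hw hwA] at h1
      nlinarith [(hσ w hw hwA).1, (hA.mem hz).1, mul_pos hπ (hσ w hw hwA).1,
        mul_nonneg hπ.le (hA.mem hz).1]
    intro z hz w hw h
    by_cases hzA : z ∈ A <;> by_cases hwA : w ∈ A
    · refine hA.injOn hzA hwA (mul_left_cancel₀ hπ.ne' ?_)
      rw [← hargA z hzA, ← hargA w hwA, h]
    · exact absurd h (hAne z hzA w (hw.resolve_left hwA) hwA)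
    · exact absurd h.symm (hAne w hwA z (hz.resolve_left hzA) hzA)
    · refine hB.injOn (hz.resolve_left hzA) (hw.resolve_left hwA) (mul_left_cancel₀ hπ.ne' ?_)
      rw [← neg_inj, ← hargB z (hz.resolve_left hzA) hzA,
        ← hargB w (hw.resolve_left hwA) hwA, h]
  have hsurj : SurjOn f (A ∪ B) univ := by
    intro c _
    rcases le_or_gt 0 (Complex.arg c) with h | h
    · have : Complex.arg c / Real.pi ∈ τ '' A := by
        rw [hA.image_eq]
        exact ⟨by positivity, (div_le_one hπ).2 (Complex.arg_le_pi _)⟩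
      obtain ⟨z, hz, hzc⟩ := this
      refine ⟨z, Or.inl hz, ?_⟩
      rw [hfA z hz, hzc, mul_div_cancel₀ _ hπ.ne', Circle.exp_arg]
    · have : -Complex.arg c / Real.pi ∈ σ '' B := by
        rw [hB.image_eq]
        exact ⟨div_nonneg (by linarith) hπ.le,
          (div_le_one hπ).2 (by linarith [Complex.neg_pi_lt_arg c])⟩
      obtain ⟨z, hz, hzc⟩ := this
      refine ⟨z, Or.inr hz, ?_⟩
      rw [hfB z hz, hzc, mul_div_cancel₀ _ hπ.ne', neg_neg, Circle.exp_arg]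
  have : CompactSpace ↥(A ∪ B) := isCompact_iff_compactSpace.1 (hcA.union hcB)
  refine ⟨(continuousOn_iff_continuous_domRestrict.1 hcont).homeoOfEquivCompactToT2
    (f := Equiv.ofBijective ((A ∪ B).domRestrict f) ⟨injOn_iff_injective.1 hinj, fun c => ?_⟩)⟩
  obtain ⟨z, hz, h⟩ := hsurj (mem_univ c)
  exact ⟨⟨z, hz⟩, h⟩

end Arcs

section LocalChart

/-- `e` identifies the subspace `K` with the rooted tree with heights `b`, and `p` with the
root. -/
structure IsChartOn {X I : Type*} [TopologicalSpace X] (K : Set X) (p : X) (b : I → I → ℝ)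
    (e : X → I → ℝ) : Prop where
  continuousOn : ContinuousOn e K
  injOn : InjOn e K
  image_eq : e '' K = branchTree b
  mem : p ∈ K
  root : e p = 0

variable {X I : Type*} [TopologicalSpace X] {K : Set X} {p : X} {b : I → I → ℝ} {e : X → I → ℝ}

theorem IsChartOn.mem_branchTree (he : IsChartOn K p b e) {x : X} (hx : x ∈ K) :
    e x ∈ branchTree b :=
  he.image_eq ▸ mem_image_of_mem e hx

theorem IsChartOn.isTreeChart (he : IsChartOn univ p b e) : IsTreeChart p b e :=
  ⟨continuousOn_univ.1 he.continuousOn, injOn_univ.1 he.injOn, image_univ ▸ he.image_eq, he.root⟩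

theorem IsChartOn.exists_eq_branchPt (he : IsChartOn K p b e) {i : I} {t : ℝ} (h0 : 0 ≤ t)
    (h1 : t ≤ b i i) : ∃ x ∈ K, e x = branchPt b i t :=
  he.image_eq.superset ⟨i, t, h0, h1, rfl⟩

/-- Any two points of a charted tree are joined by an arc. -/
theorem IsChartOn.exists_arc (hb : IsBranching b) (he : IsChartOn K p b e) (hK : IsClosed K)
    {x y : X} (hx : x ∈ K) (hy : y ∈ K) (hxy : x ≠ y) : ∃ B ⊆ K, IsClosed B ∧ x ∈ B ∧ y ∈ B ∧
      ∃ σ, IsArcCoord B σ ∧ σ x = 0 ∧ σ y = 1 := by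
  have mono : ∀ {x y : X} {i j : I} {s t : ℝ}, x ∈ K → y ∈ K → x ≠ y → 0 ≤ s → t ≤ b j j →
      e x = branchPt b i s → e y = branchPt b j t → s ≤ t → s ≤ b i j →
      ∃ B ⊆ K, IsClosed B ∧ x ∈ B ∧ y ∈ B ∧ ∃ σ, IsArcCoord B σ ∧ σ x = 0 ∧ σ y = 1 := by
    intro x y i j s t hx hy hxy hs0 ht hex hey hst hsb
    rw [branchPt_congr hb hsb] at hex
    have hst' : s < t := hst.lt_of_ne fun h => hxy (he.injOn hx hy (by rw [hex, hey, h]))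
    refine ⟨K ∩ e ⁻¹' (branchPt b j '' Icc s t), inter_subset_left,
      he.continuousOn.preimage_isClosed_of_isClosed hK
        (isCompact_Icc.image (continuous_branchPt b j)).isClosed,
      ⟨hx, s, left_mem_Icc.2 hst, hex.symm⟩, ⟨hy, t, right_mem_Icc.2 hst, hey.symm⟩, _,
      isArcCoord_of_image_eq (τ := fun z => e z j) hst' ?_ ?_ ?_, ?_, ?_⟩
    · exact (continuous_apply j).comp_continuousOn (he.continuousOn.mono inter_subset_left)
    · rintro z ⟨hz, r, hr, hzr⟩ w ⟨hw, r', hr', hwr⟩ hzw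
      refine he.injOn hz hw ?_
      simp only [← hzr, ← hwr, branchPt_self (hr.2.trans ht), branchPt_self (hr'.2.trans ht)] at *
      rw [hzw]
    · ext r
      constructor
      · rintro ⟨z, ⟨hz, r, hr, hzr⟩, rfl⟩
        simpa only [← hzr, branchPt_self (hr.2.trans ht)] using hr
      · intro hr
        obtain ⟨z, hz, hzr⟩ := he.exists_eq_branchPt (hs0.trans hr.1) (hr.2.trans ht)
        exact ⟨z, ⟨hz, r, hr, hzr.symm⟩, by simp only [hzr, branchPt_self (hr.2.trans ht)]⟩
    · simp [hex, branchPt_self (hst.trans ht)]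
    · simp [hey, branchPt_self ht, div_self (sub_pos.2 hst').ne']
  obtain ⟨i, s, hs0, hs, hex⟩ := he.mem_branchTree hx
  obtain ⟨j, t, ht0, ht, hey⟩ := he.mem_branchTree hy
  by_cases h1 : s ≤ t ∧ s ≤ b i j
  · exact mono hx hy hxy hs0 ht hex hey h1.1 h1.2
  by_cases h2 : t ≤ s ∧ t ≤ b j i
  · obtain ⟨B, hBK, hB, hyB, hxB, σ, hσ, hσy, hσx⟩ :=
      mono hy hx hxy.symm ht0 hs hey hex h2.1 h2.2
    exact ⟨B, hBK, hB, hxB, hyB, _, hσ.reverse, by simp [hσx], by simp [hσy]⟩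
  obtain ⟨hms, hmt⟩ : b i j < s ∧ b i j < t := by
    rw [hb.symm j i] at h2
    grind
  have hi : ∀ r ∈ Icc (b i j) s, branchPt b i r i = r ∧ branchPt b i r j = b i j := fun r hr =>
    ⟨branchPt_self (hr.2.trans hs), min_eq_right hr.1⟩
  have hj : ∀ r ∈ Icc (b i j) t, branchPt b j r j = r ∧ branchPt b j r i = b i j := fun r hr =>
    ⟨branchPt_self (hr.2.trans ht), by rw [branchPt, hb.symm j i]; exact min_eq_right hr.1⟩
  let P := branchPt b i '' Icc (b i j) s ∪ branchPt b j '' Icc (b i j) t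
  have hxP : e x ∈ P := Or.inl ⟨s, right_mem_Icc.2 hms.le, hex.symm⟩
  have hyP : e y ∈ P := Or.inr ⟨t, right_mem_Icc.2 hmt.le, hey.symm⟩
  have hσx : e x j - e x i = b i j - s := by
    rw [hex, (hi s (right_mem_Icc.2 hms.le)).1, (hi s (right_mem_Icc.2 hms.le)).2]
  have hσy : e y j - e y i = t - b i j := by
    rw [hey, (hj t (right_mem_Icc.2 hmt.le)).1, (hj t (right_mem_Icc.2 hmt.le)).2]
  have hlt : b i j - s < t - b i j := by linarith
  refine ⟨K ∩ e ⁻¹' P, inter_subset_left,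
    he.continuousOn.preimage_isClosed_of_isClosed hK
      ((isCompact_Icc.image (continuous_branchPt b i)).union
        (isCompact_Icc.image (continuous_branchPt b j))).isClosed,
    ⟨hx, hxP⟩, ⟨hy, hyP⟩, _,
    isArcCoord_of_image_eq (τ := fun z => e z j - e z i) hlt ?_ ?_ ?_, ?_, ?_⟩
  · exact ((continuous_apply j).comp_continuousOn (he.continuousOn.mono inter_subset_left)).sub
      ((continuous_apply i).comp_continuousOn (he.continuousOn.mono inter_subset_left))
  · have hmeet : branchPt b i (b i j) = branchPt b j (b i j) := branchPt_congr hb le_rfl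
    rintro z ⟨hz, ⟨r, hr, hzr⟩ | ⟨r, hr, hzr⟩⟩ w ⟨hw, ⟨r', hr', hwr⟩ | ⟨r', hr', hwr⟩⟩ hzw <;>
      refine he.injOn hz hw ?_ <;> simp only [← hzr, ← hwr] at hzw ⊢
    · rw [(hi r hr).1, (hi r hr).2, (hi r' hr').1, (hi r' hr').2] at hzw
      rw [show r = r' by linarith]
    · rw [(hi r hr).1, (hi r hr).2, (hj r' hr').1, (hj r' hr').2] at hzw
      rw [show r = b i j by linarith [hr.1, hr'.1], show r' = b i j by linarith [hr.1, hr'.1],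
        hmeet]
    · rw [(hj r hr).1, (hj r hr).2, (hi r' hr').1, (hi r' hr').2] at hzw
      rw [show r = b i j by linarith [hr.1, hr'.1], show r' = b i j by linarith [hr.1, hr'.1],
        hmeet]
    · rw [(hj r hr).1, (hj r hr).2, (hj r' hr').1, (hj r' hr').2] at hzw
      rw [show r = r' by linarith]
  · ext u
    constructor
    · rintro ⟨z, ⟨hz, ⟨r, hr, hzr⟩ | ⟨r, hr, hzr⟩⟩, rfl⟩ <;> simp only [← hzr]
      · rw [(hi r hr).1, (hi r hr).2]
        constructor <;> linarith [hr.1, hr.2]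
      · rw [(hj r hr).1, (hj r hr).2]
        constructor <;> linarith [hr.1, hr.2]
    · intro hu
      rcases le_total u 0 with h | h
      · have hr : b i j - u ∈ Icc (b i j) s := ⟨by linarith, by linarith [hu.1]⟩
        obtain ⟨z, hz, hzr⟩ := he.exists_eq_branchPt ((hb.nonneg i j).trans hr.1) (hr.2.trans hs)
        refine ⟨z, ⟨hz, Or.inl ⟨_, hr, hzr.symm⟩⟩, ?_⟩
        simp only [hzr]
        rw [(hi _ hr).1, (hi _ hr).2]
        ring
      · have hr : b i j + u ∈ Icc (b i j) t := ⟨by linarith, by linarith [hu.2]⟩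
        obtain ⟨z, hz, hzr⟩ := he.exists_eq_branchPt ((hb.nonneg i j).trans hr.1) (hr.2.trans ht)
        refine ⟨z, ⟨hz, Or.inr ⟨_, hr, hzr.symm⟩⟩, ?_⟩
        simp only [hzr]
        rw [(hj _ hr).1, (hj _ hr).2]
        ring
  · simp [hσx]
  · simp only [hσy]
    exact div_self (sub_pos.2 hlt).ne'

/-- The branching heights of the tree obtained by attaching a new branch of length one at `z`,
which has height `s`. -/
def attachBranch (b : I → I → ℝ) (z : I → ℝ) (s : ℝ) : Option I → Option I → ℝ
  | none, none => s + 1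
  | none, some j => z j
  | some i, none => z i
  | some i, some j => b i j

theorem IsBranching.attachBranch (hb : IsBranching b) {l : I} {s : ℝ} (h0 : 0 ≤ s) :
    IsBranching (attachBranch b (branchPt b l s) s) := by
  have hz := branchPt_mem hb l h0
  refine ⟨?_, ?_, ?_⟩
  · rintro (_ | i) (_ | j) <;> simp only [_root_.attachBranch]
    exacts [by linarith, (hz j).1, (hz i).1, hb.nonneg i j]
  · rintro (_ | i) (_ | j) <;> simp only [_root_.attachBranch]
    exact hb.symm i j
  · rintro (_ | i) (_ | j) (_ | k) <;> simp only [_root_.attachBranch]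
    · exact min_le_left _ _
    · rw [min_self]
      exact (min_le_left _ _).trans (by linarith)
    · exact min_le_right _ _
    · exact (hz k).2.2 j
    · exact min_le_left _ _
    · rw [min_comm, hb.symm]
      exact (hz k).2.2 _
    · refine le_trans ?_ (hb.ultra i j l)
      rw [hb.symm i l]
      exact min_le_min (min_le_right _ _) (min_le_right _ _)
    · exact hb.ultra _ _ _

open Classical in
/-- The coordinates of a tree after attaching the arc `A` with coordinate `τ` at a point with
coordinates `z = branchPt b i s`. -/
noncomputable def attachCoord {X I : Type*} (e : X → I → ℝ) (A : Set X) (τ : X → ℝ) (z : I → ℝ)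
    (i : I) (s : ℝ) (x : X) : Option I → ℝ
  | none => if x ∈ A then s + τ x else min (e x i) s
  | some j => if x ∈ A then z j else e x j

theorem IsChartOn.attach (hb : IsBranching b) (he : IsChartOn K p b e) (hK : IsClosed K)
    {A : Set X} {τ : X → ℝ} (hA : IsClosed A) (hτ : IsArcCoord A τ) {x : X} (hAK : A ∩ K = {x})
    (hτx : τ x = 0) {i : I} {s : ℝ} (h0 : 0 ≤ s) (hs : s ≤ b i i) (hex : e x = branchPt b i s) :
    IsChartOn (K ∪ A) p (attachBranch b (branchPt b i s) s)
      (attachCoord e A τ (branchPt b i s) i s) := by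
  have hx : x ∈ A ∩ K := hAK ▸ rfl
  have hb' := hb.attachBranch (l := i) h0
  set z := branchPt b i s with hz
  have hzi : z i = s := branchPt_self hs
  set e' := attachCoord e A τ z i s with he'
  have hA' : ∀ a ∈ A, e' a = fun o => o.elim (s + τ a) z := by
    intro a ha
    funext o
    cases o <;> simp [he', attachCoord, ha]
  have hK' : ∀ k ∈ K, e' k = fun o => o.elim (min (e k i) s) (e k) := by
    intro k hk
    by_cases hkA : k ∈ A
    · have : k ∈ ({x} : Set X) := hAK ▸ ⟨hkA, hk⟩
      obtain rfl := this
      rw [hA' k hkA, hτx, hex, hzi]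
      simp
    · funext o
      cases o <;> simp [he', attachCoord, hkA]
  have hptA : ∀ r, s ≤ r → r ≤ s + 1 →
      branchPt (attachBranch b z s) none r = fun o => o.elim r z := by
    intro r hr hr1
    funext o
    cases o with
    | none => exact min_eq_left hr1
    | some j => exact min_eq_right ((min_le_left _ _).trans hr)
  have hptK : ∀ k r, branchPt (attachBranch b z s) (some k) r =
      fun o => o.elim (min (branchPt b k r i) s) (branchPt b k r) := by
    intro k r
    funext o
    cases o with
    | none =>
      simp only [branchPt, attachBranch, Option.elim_none, hz]
      rw [hb.symm i k, min_comm s, min_assoc]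
    | some j => rfl
  refine ⟨?_, ?_, ?_, Or.inl he.mem, ?_⟩
  · have hc : ∀ j, ContinuousOn (fun x => e x j) K := fun j =>
      (continuous_apply j).comp_continuousOn he.continuousOn
    refine ContinuousOn.union_of_isClosed ?_ ?_ hK hA
    · refine ContinuousOn.congr ?_ hK'
      refine continuousOn_pi.2 fun o => ?_
      cases o with
      | none => exact (hc i).inf continuousOn_const
      | some j => exact hc j
    · refine ContinuousOn.congr ?_ hA'
      refine continuousOn_pi.2 fun o => ?_
      cases o with
      | none => exact continuousOn_const.add hτ.continuousOn
      | some j => exact continuousOn_const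
  · have hinjA : InjOn e' A := by
      intro v hv w hw h
      rw [hA' v hv, hA' w hw] at h
      exact hτ.injOn hv hw (by simpa using congrFun h none)
    have hKA : ∀ v ∈ K, ∀ w ∈ A, e' v = e' w → v = w := by
      intro v hv w hw h
      have hvx : v = x := by
        refine he.injOn hv hx.2 ?_
        rw [hK' v hv, hA' w hw] at h
        funext j
        simpa [hex] using congrFun h (some j)
      exact hinjA (hvx ▸ hx.1) hw h
    rintro v (hv | hv) w (hw | hw) h
    · refine he.injOn hv hw ?_
      rw [hK' v hv, hK' w hw] at h
      funext j
      simpa using congrFun h (some j)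
    · exact hKA v hv w hw h
    · exact (hKA w hw v hv h.symm).symm
    · exact hinjA hv hw h
  · refine Subset.antisymm ?_ ?_
    · rintro _ ⟨v, hv | hv, rfl⟩
      · obtain ⟨k, r, h0, hr, hvr⟩ := he.mem_branchTree hv
        exact ⟨some k, r, h0, hr, by rw [hK' v hv, hptK, hvr]⟩
      · have := hτ.mem hv
        refine ⟨none, s + τ v, by linarith [this.1], ?_, ?_⟩
        · change s + τ v ≤ s + 1
          linarith [this.2]
        · rw [hA' v hv, hptA _ (by linarith [this.1]) (by linarith [this.2])]
    · have hsome : ∀ k r, 0 ≤ r → r ≤ b k k →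
          branchPt (attachBranch b z s) (some k) r ∈ e' '' (K ∪ A) := by
        intro k r h0 hr
        obtain ⟨v, hv, hvr⟩ := he.exists_eq_branchPt h0 hr
        exact ⟨v, Or.inl hv, by rw [hK' v hv, hptK, hvr]⟩
      rintro _ ⟨_ | k, r, h0, hr, rfl⟩
      · change r ≤ s + 1 at hr
        rcases le_total s r with h | h
        · obtain ⟨a, ha, har⟩ := hτ.image_eq.superset
            (show r - s ∈ Icc (0 : ℝ) 1 from ⟨by linarith, by linarith⟩)
          refine ⟨a, Or.inr ha, ?_⟩
          rw [hA' a ha, hptA r h hr, har]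
          simp
        · rw [branchPt_congr hb' (k := some i) (show r ≤ z i by rwa [hzi])]
          exact hsome i r h0 (h.trans hs)
      · exact hsome k r h0 hr
  · rw [hK' p he.mem, he.root]
    funext o
    cases o <;> simp [h0]

end LocalChart

section TreeChart

/-- The branching heights of an arc, rooted at the point at distance `c` from an end point. -/
def arcBranching (c : ℝ) : Bool → Bool → ℝ
  | true, true => 1 - c
  | false, false => c
  | _, _ => 0

theorem isBranching_arcBranching {c : ℝ} (hc : c ∈ Icc (0 : ℝ) 1) :
    IsBranching (arcBranching c) := by
  have h0 := hc.1
  have h1 := sub_nonneg.2 hc.2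
  refine ⟨?_, ?_, ?_⟩
  · rintro (_ | _) (_ | _) <;> simp [arcBranching, h0, hc.2]
  · rintro (_ | _) (_ | _) <;> rfl
  · rintro (_ | _) (_ | _) (_ | _) <;> simp [arcBranching, h0, hc.2]

/-- The coordinates of an arc rooted at the point with coordinate `c`. -/
def arcCoord {X : Type*} (τ : X → ℝ) (c : ℝ) (x : X) : Bool → ℝ
  | true => max (τ x - c) 0
  | false => max (c - τ x) 0

theorem IsArcCoord.isChartOn {X : Type*} [TopologicalSpace X] {A : Set X} {τ : X → ℝ}
    (hτ : IsArcCoord A τ) {p : X} (hp : p ∈ A) :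
    IsChartOn A p (arcBranching (τ p)) (arcCoord τ (τ p)) := by
  have hc := hτ.mem hp
  set c := τ p with hcp
  refine ⟨?_, ?_, ?_, hp, ?_⟩
  · refine continuousOn_pi.2 fun i => ?_
    cases i with
    | true => exact (hτ.continuousOn.sub continuousOn_const).sup continuousOn_const
    | false => exact (continuousOn_const.sub hτ.continuousOn).sup continuousOn_const
  · intro x hx y hy h
    have h1 : max (τ x - c) 0 = max (τ y - c) 0 := congrFun h true
    have h2 : max (c - τ x) 0 = max (c - τ y) 0 := congrFun h false
    refine hτ.injOn hx hy ?_
    grind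
  · ext z
    constructor
    · rintro ⟨x, hx, rfl⟩
      have hm := hτ.mem hx
      rcases le_total c (τ x) with h | h
      · refine ⟨true, τ x - c, sub_nonneg.2 h, sub_le_sub_right hm.2 c, ?_⟩
        funext i
        cases i <;> simp [arcCoord, branchPt, arcBranching, h, hm.2]
      · refine ⟨false, c - τ x, sub_nonneg.2 h, sub_le_self c hm.1, ?_⟩
        funext i
        cases i <;> simp [arcCoord, branchPt, arcBranching, h, hm.1]
    · rintro ⟨_ | _, t, h0, h1, rfl⟩
      · change t ≤ c at h1
        obtain ⟨x, hx, hxt⟩ := hτ.image_eq.superset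
          (show c - t ∈ Icc (0 : ℝ) 1 from ⟨by linarith, by linarith [hc.2]⟩)
        refine ⟨x, hx, ?_⟩
        funext i
        cases i <;> simp [arcCoord, branchPt, arcBranching, hxt, h0, h1]
      · change t ≤ 1 - c at h1
        obtain ⟨x, hx, hxt⟩ := hτ.image_eq.superset
          (show c + t ∈ Icc (0 : ℝ) 1 from ⟨by linarith [hc.1], by linarith⟩)
        refine ⟨x, hx, ?_⟩
        funext i
        cases i <;> simp [arcCoord, branchPt, arcBranching, hxt, h0, h1]
  · funext i
    cases i <;> simp [arcCoord, ← hcp]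

/-- The subspace `K` is a tree with finitely many branches, rooted at `p`. -/
def HasChart {X : Type*} [TopologicalSpace X] (p : X) (K : Set X) : Prop :=
  ∃ (I : Type) (_ : Fintype I) (b : I → I → ℝ) (e : X → I → ℝ), IsBranching b ∧ IsChartOn K p b e

theorem HasChart.union_arc {X : Type*} [TopologicalSpace X] [T2Space X]
    (hS : ∀ S : Set X, ¬ IsSimpleClosedCurve S) {p : X} {K A : Set X} (hK : HasChart p K)
    (hcK : IsCompact K) (hA : IsArcSet A) (hne : (A ∩ K).Nonempty)
    (hend : ∀ x ∈ A ∩ K, IsArcEndpoint A x) : HasChart p (K ∪ A) := by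
  obtain ⟨I, _, b, e, hb, he⟩ := hK
  obtain ⟨x, hx⟩ := hne
  obtain ⟨τ, hτ, hτx⟩ := (hend x hx).exists_isArcCoord
  have hone : ∀ y ∈ A ∩ K, y ≠ x → τ y = 1 := fun y hy hyx =>
    (hτ.eq_zero_or_one hy.1 (hend y hy)).resolve_left fun h =>
      hyx (hτ.injOn hy.1 hx.1 (h.trans hτx.symm))
  have huniq : A ∩ K = {x} := by
    refine eq_singleton_iff_unique_mem.2 ⟨hx, fun y hy => ?_⟩
    by_contra hyx
    obtain ⟨B, hBK, hB, hxB, hyB, σ, hσ, hσx, hσy⟩ :=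
      he.exists_arc hb hcK.isClosed hx.2 hy.2 (Ne.symm hyx)
    refine hS _ (hτ.isSimpleClosedCurve hσ hA.isCompact (hcK.of_isClosed_subset hB hBK) ?_ hτx hσx
      (hone y hy hyx) hσy)
    refine Subset.antisymm (fun z hz => ?_) ?_
    · have hzK : z ∈ A ∩ K := ⟨hz.1, hBK hz.2⟩
      by_cases hzx : z = x
      · exact Or.inl hzx
      · exact Or.inr (hτ.injOn hz.1 hy.1 ((hone z hzK hzx).trans (hone y hy hyx).symm))
    · rintro z (rfl | rfl)
      · exact ⟨hx.1, hxB⟩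
      · exact ⟨hy.1, hyB⟩
  obtain ⟨i, s, h0, hs, hex⟩ := he.mem_branchTree hx.2
  exact ⟨Option I, inferInstance, _, _, hb.attachBranch h0,
    he.attach hb hcK.isClosed hA.isCompact.isClosed hτ huniq hτx h0 hs hex⟩

theorem IsTree.hasChart {X : Type u} [MetricSpace X] (hX : IsTree X) (p : X) :
    HasChart p (univ : Set X) := by
  classical
  obtain ⟨⟨hcomp, hconn, -, 𝒜, harc, hcover, hAint⟩, hS⟩ := hX
  let 𝒮 := 𝒜.powerset.filter fun ℬ : Finset (Set X) => HasChart p (⋃₀ (ℬ : Set (Set X)))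
  have h𝒮 : 𝒮.Nonempty := by
    obtain ⟨A, hA, hpA⟩ : p ∈ ⋃₀ (𝒜 : Set (Set X)) := hcover ▸ mem_univ p
    obtain ⟨τ, hτ⟩ := (harc A hA).exists_isArcCoord
    refine ⟨{A}, Finset.mem_filter.2 ⟨by simpa using hA, Bool, inferInstance, _,
      arcCoord τ (τ p), isBranching_arcBranching (hτ.mem hpA), ?_⟩⟩
    simpa using hτ.isChartOn hpA
  obtain ⟨ℬ, hℬ, hmax⟩ := Finset.exists_max_image 𝒮 Finset.card h𝒮
  obtain ⟨hsub, hchart⟩ := Finset.mem_filter.1 hℬ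
  rw [Finset.mem_powerset] at hsub
  have hcompact : ∀ 𝒟 ⊆ 𝒜, IsCompact (⋃₀ (𝒟 : Set (Set X))) := fun 𝒟 h𝒟 =>
    𝒟.finite_toSet.isCompact_sUnion fun A hA => (harc A (h𝒟 hA)).isCompact
  have hpℬ : p ∈ ⋃₀ (ℬ : Set (Set X)) := by
    obtain ⟨_, _, _, _, -, he⟩ := hchart
    exact he.mem
  suffices h : ⋃₀ (ℬ : Set (Set X)) = univ by rwa [← h]
  by_contra hne
  obtain ⟨A, hA, hAB, hAK⟩ : ∃ A ∈ 𝒜, A ∉ ℬ ∧ (A ∩ ⋃₀ (ℬ : Set (Set X))).Nonempty := by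
    by_contra! hcon
    have hcompl : (⋃₀ (ℬ : Set (Set X)))ᶜ = ⋃₀ ((𝒜 \ ℬ : Finset (Set X)) : Set (Set X)) := by
      ext x
      constructor
      · intro hx
        obtain ⟨A, hA, hxA⟩ : x ∈ ⋃₀ (𝒜 : Set (Set X)) := hcover ▸ mem_univ x
        exact ⟨A, by simpa using ⟨hA, fun h => hx ⟨A, h, hxA⟩⟩, hxA⟩
      · rintro ⟨A, hA, hxA⟩ hx
        simp only [Finset.coe_sdiff, mem_sdiff, Finset.mem_coe] at hA
        exact (hcon A hA.1 hA.2).subset ⟨hxA, hx⟩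
    have hclopen : IsClopen (⋃₀ (ℬ : Set (Set X))) := by
      refine ⟨(hcompact ℬ hsub).isClosed, ?_⟩
      rw [← isClosed_compl_iff, hcompl]
      exact (hcompact _ Finset.sdiff_subset).isClosed
    exact hne (hclopen.eq_univ ⟨p, hpℬ⟩)
  have hnew : HasChart p (⋃₀ (ℬ : Set (Set X)) ∪ A) := by
    refine hchart.union_arc hS (hcompact ℬ hsub) (harc A hA) hAK ?_
    rintro x ⟨hxA, B, hB, hxB⟩
    exact (hAint A hA B (hsub hB) (fun h => hAB (h ▸ hB)) x ⟨hxA, hxB⟩).1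
  have := hmax (insert A ℬ) (Finset.mem_filter.2
    ⟨Finset.mem_powerset.2 (Finset.insert_subset hA hsub), ?_⟩)
  · rw [Finset.card_insert_of_notMem hAB] at this
    omega
  · rwa [Finset.coe_insert, sUnion_insert, union_comm]

theorem IsTree.nontrivial {X : Type u} [MetricSpace X] (hX : IsTree X) : Nontrivial X := by
  obtain ⟨⟨-, -, ⟨p⟩, 𝒜, harc, hcover, -⟩, -⟩ := hX
  obtain ⟨A, hA, -⟩ : p ∈ ⋃₀ (𝒜 : Set (Set X)) := hcover ▸ mem_univ p
  obtain ⟨h⟩ := harc A hA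
  refine ⟨h.symm ⟨0, by norm_num⟩, h.symm ⟨1, by norm_num⟩, fun heq => ?_⟩
  simpa using h.symm.injective (Subtype.ext heq)

/-- A branch contained in another one can be omitted. -/
theorem IsTreeChart.eraseBranch {X I : Type*} [TopologicalSpace X] {p : X} {b : I → I → ℝ}
    {e : X → I → ℝ} (hb : IsBranching b) (he : IsTreeChart p b e) {i j : I} (hij : i ≠ j)
    (h : b i j = b i i) : IsTreeChart p (fun k l : {k // k ≠ i} => b k l) fun x k => e x k := by
  refine ⟨?_, ?_, ?_, ?_⟩
  · exact continuous_pi fun k => (continuous_apply k.1).comp he.continuous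
  · have hi : ∀ x, e x i = min (e x j) (b i i) := by
      intro x
      have hx := branchTree_subset hb (he.mem x)
      refine le_antisymm (le_min ?_ (hx i).2.1) ?_
      · have := (hx i).2.2 j
        rwa [h, min_eq_left (hx i).2.1] at this
      · have := (hx j).2.2 i
        rwa [hb.symm, h] at this
    intro x y hxy
    refine he.injective (funext fun k => ?_)
    have hne : ∀ k ≠ i, e x k = e y k := fun k hk => congrFun hxy ⟨k, hk⟩
    by_cases hk : k = i
    · rw [hk, hi, hi, hne j hij.symm]
    · exact hne k hk
  · ext z
    constructor
    · rintro ⟨x, rfl⟩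
      obtain ⟨k, t, h0, ht, hx⟩ := he.mem x
      by_cases hk : k = i
      · subst hk
        rw [branchPt_congr hb (ht.trans h.ge)] at hx
        refine ⟨⟨j, hij.symm⟩, t, h0, ht.trans ?_, by simp only [hx]; rfl⟩
        rw [← h, hb.symm]
        exact hb.le_diag _ _
      · exact ⟨⟨k, hk⟩, t, h0, ht, by simp only [hx]; rfl⟩
    · rintro ⟨k, t, h0, ht, rfl⟩
      obtain ⟨x, hx⟩ := he.range_eq.superset ⟨k.1, t, h0, ht, rfl⟩
      exact ⟨x, by simp only [hx]; rfl⟩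
  · funext k
    simp [he.root]

theorem IsTreeChart.exists_reduced {X : Type*} [TopologicalSpace X] [Nontrivial X] {p : X}
    {I : Type} [Fintype I] {b : I → I → ℝ} {e : X → I → ℝ} (hb : IsBranching b)
    (he : IsTreeChart p b e) : ∃ (I : Type) (_ : Fintype I) (b : I → I → ℝ) (e : X → I → ℝ),
      IsReducedBranching b ∧ IsTreeChart p b e := by
  classical
  induction hn : Fintype.card I using Nat.strong_induction_on generalizing I with
  | _ n ih =>
    by_cases hlt : ∀ i j, i ≠ j → b i j < b i i
    · refine ⟨I, inferInstance, b, e, { hb with pos := fun i => ?_, lt := hlt }, he⟩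
      by_cases hI : ∃ j, i ≠ j
      · obtain ⟨j, hj⟩ := hI
        exact (hb.nonneg i j).trans_lt (hlt i j hj)
      · push Not at hI
        refine (hb.nonneg i i).lt_of_ne fun h0 => ?_
        have hzero : ∀ x, e x = 0 := by
          intro x
          obtain ⟨k, t, ht0, ht, hx⟩ := he.mem x
          rw [← hI k, ← h0] at ht
          rw [hx, le_antisymm ht ht0, branchPt_zero hb]
        obtain ⟨x, y, hxy⟩ := exists_pair_ne X
        exact hxy (he.injective ((hzero x).trans (hzero y).symm))
    · push Not at hlt
      obtain ⟨i, j, hij, h⟩ := hlt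
      refine ih _ ?_ (b := fun k l : {k // k ≠ i} => b k l)
        ⟨fun _ _ => hb.nonneg _ _, fun _ _ => hb.symm _ _, fun _ _ _ => hb.ultra _ _ _⟩
        (he.eraseBranch hb hij (le_antisymm (hb.le_diag i j) h)) rfl
      rw [← hn]
      exact Fintype.card_subtype_lt (x := i) (by simp)

theorem IsTree.exists_reducedChart {X : Type u} [MetricSpace X] (hX : IsTree X) (p : X) :
    ∃ (I : Type) (_ : Fintype I) (b : I → I → ℝ) (e : X → I → ℝ),
      IsReducedBranching b ∧ IsTreeChart p b e := by
  have := hX.nontrivial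
  obtain ⟨I, _, b, e, hb, he⟩ := hX.hasChart p
  exact he.isTreeChart.exists_reduced hb

end TreeChart

theorem statement19 {X : Type u} [MetricSpace X] (hX : IsTree X) (p : X) :
    UniqueHyperspaceInTrees X p := by
  intro Y _ hY q ⟨H⟩
  have : CompactSpace X := hX.1.1
  have : CompactSpace Y := hY.1.1
  obtain ⟨I, _, b, e, hb, he⟩ := hX.exists_reducedChart p
  obtain ⟨I', _, b', e', hb', he'⟩ := hY.exists_reducedChart q
  obtain ⟨H₁⟩ := he.nonempty_homeomorph_CP hb.toIsBranching
  obtain ⟨H₂⟩ := he'.nonempty_homeomorph_CP hb'.toIsBranching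
  obtain ⟨g, hg, hg0⟩ :=
    exists_equiv_of_homeomorph_subtreeSpace hb hb' ((H₁.trans H).trans H₂.symm)
  have hbg : IsBranching fun i j => b' (g i) (g j) :=
    ⟨fun _ _ => hb'.nonneg _ _, fun _ _ => hb'.symm _ _, fun _ _ _ => hb'.ultra _ _ _⟩
  have hchart := (he'.reindex g).normalize hbg
  rw [← normHeight_congr hb.nonneg hbg.nonneg hg hg0] at hchart
  exact (he.normalize hb.toIsBranching).exists_homeomorph hchart
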